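/- arXiv:2112.10405 — 3 statements merged into one kernel-verified Lean document; each statement's English description precedes it below -/
import Mathlib

section
/- In the diffusive regime 0 < p < 3/4, the score-type martingale satisfies P_n/√(log n) → N(0, 1/(3 − 4p)) in distribution as n → ∞, i.e., the law of P_n/√(log n) converges weakly to the centered Gaussian distribution with variance 1/(3 − 4p). -/
open MeasureTheory ProbabilityTheory Filter Finset
open scoped BoundedContinuousFunction ENNReal NNReal Topology

noncomputable section

variable {Ω : Type*}

/-- Position of the elephant random walk: `S n = X 1 + ⋯ + X n`. -/
def erwS (X : ℕ → Ω → ℝ) (n : ℕ) (ω : Ω) : ℝ :=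
  ∑ k ∈ Finset.Icc 1 n, X k ω

/-- `V n = 4 ∑_{k=1}^{n-1} (S k / k)²`, the approximate conditional Fisher information. -/
def erwV (X : ℕ → Ω → ℝ) (n : ℕ) (ω : Ω) : ℝ :=
  4 * ∑ k ∈ Finset.Icc 1 (n - 1), (erwS X k ω / k) ^ 2

/-- The quasi-maximum likelihood estimator `p̂ n` of the memory parameter. -/
def erwPhat (X : ℕ → Ω → ℝ) (n : ℕ) (ω : Ω) : ℝ :=
  (∑ k ∈ Finset.Icc 1 (n - 1), (erwS X k ω / k) * (X (k + 1) ω + erwS X k ω / k)) /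
    (2 * ∑ k ∈ Finset.Icc 1 (n - 1), (erwS X k ω / k) ^ 2)

/-- The elephant random walk hypotheses with memory parameter `p ∈ [0,1]`:
the steps take values in `{-1, 1}`, are adapted to the filtration `ℱ`
(which plays the role of `σ(X_1, …, X_n)`), and
`E[X_{n+1} | ℱ_n] = (2p - 1) · S_n / n` almost surely. -/
def IsERW {m0 : MeasurableSpace Ω} (μ : Measure Ω) (ℱ : Filtration ℕ m0)
    (X : ℕ → Ω → ℝ) (p : ℝ) : Prop :=
  0 ≤ p ∧ p ≤ 1 ∧
  (∀ n, 1 ≤ n → ∀ ω, X n ω = 1 ∨ X n ω = -1) ∧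
  (∀ n, 1 ≤ n → Measurable[ℱ n] (X n)) ∧
  (∀ n, 1 ≤ n → μ[X (n + 1) | ℱ n] =ᵐ[μ] fun ω => (2 * p - 1) * (erwS X n ω / n))

/-- The score-type martingale `P n = ∑_{k=1}^{n-1} (S k / k) ε_{k+1} / (1 - a² (S k / k)²)`. -/
def erwP (X : ℕ → Ω → ℝ) (a : ℝ) (n : ℕ) (ω : Ω) : ℝ :=
  ∑ k ∈ Finset.Icc 1 (n - 1),
    (erwS X k ω / k) * (X (k + 1) ω - a * (erwS X k ω / k)) /
      (1 - a ^ 2 * (erwS X k ω / k) ^ 2)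

/-!
McLeish's argument gives the central limit theorem for bounded martingale differences `d k`: the
product `∏ (1 + i t d k)` has mean `1`, while `exp (i t ∑ d k)` is close to
`∏ (1 + i t d k) * exp (-t² ∑ (d k)² / 2)`. Hence `∑ d k / s n` is asymptotically Gaussian as soon
as `∑ (d k)² / (s n)²` converges in probability to a constant; truncating the `d k` once the sum of
squares is too large keeps the product bounded.

For the score, `(d k)²` is `(S k / k)²` up to `O(|S k / k|³)`. The drift of `S n ^ 2 / n` is
`(1 - (3 - 4 p) S n ^ 2 / n) / (n + 1)`, so that
`(3 - 4 p) ∑ (S k / k)² = log n + O(1) - S n ^ 2 / n + martingale`. For `p < 3 / 4` the second and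
fourth moments of `S k` are `O(k)` and `O(k²)`, which makes every error term `O(√(log n))` in `L¹`.
-/

section CharacteristicExponential

open Complex

lemma norm_prod_sub_prod_le_sum_norm_sub {ι R : Type*} [NormedCommRing R] [NormOneClass R]
    (s : Finset ι) (a b : ι → R) (ha : ∀ i ∈ s, ‖a i‖ ≤ 1) (hb : ∀ i ∈ s, ‖b i‖ ≤ 1) :
    ‖∏ i ∈ s, a i - ∏ i ∈ s, b i‖ ≤ ∑ i ∈ s, ‖a i - b i‖ := by
  classical
  induction s using Finset.induction_on with
  | empty => simp
  | insert i s hi ih =>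
    rw [forall_mem_insert] at ha hb
    have hprod : ‖∏ j ∈ s, a j‖ ≤ 1 :=
      (norm_prod_le s a).trans (prod_le_one (fun _ _ => norm_nonneg _) ha.2)
    rw [prod_insert hi, prod_insert hi, sum_insert hi]
    calc ‖a i * ∏ j ∈ s, a j - b i * ∏ j ∈ s, b j‖
        = ‖(a i - b i) * ∏ j ∈ s, a j + b i * (∏ j ∈ s, a j - ∏ j ∈ s, b j)‖ := by ring_nf
      _ ≤ ‖a i - b i‖ * ‖∏ j ∈ s, a j‖ + ‖b i‖ * ‖∏ j ∈ s, a j - ∏ j ∈ s, b j‖ :=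
          (norm_add_le _ _).trans (add_le_add (norm_mul_le _ _) (norm_mul_le _ _))
      _ ≤ ‖a i - b i‖ * 1 + 1 * ∑ j ∈ s, ‖a j - b j‖ := by
          gcongr
          exacts [hb.1, ih ha.2 hb.2]
      _ = ‖a i - b i‖ + ∑ j ∈ s, ‖a j - b j‖ := by ring

lemma norm_one_add_mul_I_le_exp (x : ℝ) : ‖1 + x * I‖ ≤ Real.exp (x ^ 2 / 2) := by
  have hsq : ‖1 + x * I‖ ^ 2 = 1 + x ^ 2 := by
    rw [← normSq_eq_norm_sq, normSq_apply]
    simp [sq]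
  refine le_of_sq_le_sq ?_ (Real.exp_nonneg _)
  rw [hsq, ← Real.exp_nat_mul]
  have := Real.add_one_le_exp (x ^ 2)
  convert (add_comm 1 (x ^ 2)).le.trans this using 2
  push_cast; ring

lemma norm_prod_one_add_mul_I_le_exp {ι : Type*} (s : Finset ι) (x : ι → ℝ) :
    ‖∏ i ∈ s, (1 + x i * I)‖ ≤ Real.exp ((∑ i ∈ s, x i ^ 2) / 2) := by
  rw [norm_prod, sum_div, Real.exp_sum]
  exact prod_le_prod (fun _ _ => norm_nonneg _) fun i _ => norm_one_add_mul_I_le_exp (x i)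

lemma norm_one_add_mul_I_mul_exp_le_one (x : ℝ) :
    ‖(1 + x * I) * Real.exp (-(x ^ 2 / 2))‖ ≤ 1 := by
  rw [norm_mul, norm_real, Real.norm_eq_abs, Real.abs_exp]
  calc ‖1 + x * I‖ * Real.exp (-(x ^ 2 / 2))
      ≤ Real.exp (x ^ 2 / 2) * Real.exp (-(x ^ 2 / 2)) := by
        gcongr
        exact norm_one_add_mul_I_le_exp x
    _ = 1 := by rw [← Real.exp_add, add_neg_cancel, Real.exp_zero]

lemma norm_exp_mul_I_sub_one_add_mul_I_mul_exp_le {x : ℝ} (hx : |x| ≤ 1) :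
    ‖exp (x * I) - (1 + x * I) * Real.exp (-(x ^ 2 / 2))‖ ≤ 2 * |x| ^ 3 := by
  have hnorm : ‖(x : ℂ) * I‖ = |x| := by simp
  have htaylor : ‖exp (x * I) - (1 + x * I - x ^ 2 / 2)‖ ≤ |x| ^ 3 := by
    have h := exp_bound (x := x * I) (by rwa [hnorm]) (n := 3) (by norm_num)
    have hsum : ∑ m ∈ range 3, (x * I) ^ m / (m.factorial : ℂ) = 1 + x * I - x ^ 2 / 2 := by
      simp only [sum_range_succ, sum_range_zero, Nat.factorial]
      push_cast
      linear_combination (x ^ 2 / 2 : ℂ) * I_sq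
    rw [hsum, hnorm] at h
    refine h.trans (mul_le_of_le_one_right (by positivity) ?_)
    norm_num [Nat.factorial]
  have hexp : |Real.exp (-(x ^ 2 / 2)) - 1 + x ^ 2 / 2| ≤ |x| ^ 3 / 4 := by
    have hsq : x ^ 2 ≤ 1 := (sq_le_one_iff_abs_le_one x).2 hx
    have h := Real.abs_exp_sub_one_sub_id_le (x := -(x ^ 2 / 2))
      (by rw [abs_neg, abs_of_nonneg (by positivity)]; linarith)
    rw [sub_neg_eq_add] at h
    calc _ ≤ (-(x ^ 2 / 2)) ^ 2 := h
      _ = |x| ^ 3 * |x| / 4 := by rw [← pow_succ, (by decide : Even 4).pow_abs]; ring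
      _ ≤ |x| ^ 3 / 4 := by
        gcongr
        exact mul_le_of_le_one_right (by positivity) hx
  have hone : ‖1 + (x : ℂ) * I‖ ≤ 2 := by
    refine (norm_add_le _ _).trans ?_
    rw [norm_one, hnorm]
    linarith
  calc ‖exp (x * I) - (1 + x * I) * Real.exp (-(x ^ 2 / 2))‖
      = ‖(exp (x * I) - (1 + x * I - x ^ 2 / 2)) + x ^ 3 / 2 * I
          - (1 + x * I) * ((Real.exp (-(x ^ 2 / 2)) - 1 + x ^ 2 / 2 : ℝ) : ℂ)‖ := by
        congr 1
        push_cast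
        ring
    _ ≤ |x| ^ 3 + |x| ^ 3 / 2 + 2 * (|x| ^ 3 / 4) := by
        refine (norm_sub_le _ _).trans (add_le_add ((norm_add_le _ _).trans
          (add_le_add htaylor ?_)) ?_)
        · simp
        · rw [norm_mul, norm_real, Real.norm_eq_abs]
          exact mul_le_mul hone hexp (abs_nonneg _) zero_le_two
    _ = 2 * |x| ^ 3 := by ring

lemma norm_exp_sum_mul_I_sub_prod_le {ι : Type*} (s : Finset ι) (x : ι → ℝ) {η : ℝ}
    (hη : η ≤ 1) (hx : ∀ i ∈ s, |x i| ≤ η) :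
    ‖exp ((∑ i ∈ s, x i : ℝ) * I)
        - (∏ i ∈ s, (1 + x i * I)) * Real.exp (-((∑ i ∈ s, x i ^ 2) / 2))‖
      ≤ 2 * η * ∑ i ∈ s, x i ^ 2 := by
  have hprod : (∏ i ∈ s, (1 + x i * I)) * Real.exp (-((∑ i ∈ s, x i ^ 2) / 2))
      = ∏ i ∈ s, (1 + x i * I) * Real.exp (-(x i ^ 2 / 2)) := by
    rw [prod_mul_distrib, sum_div, ← sum_neg_distrib, Real.exp_sum, ofReal_prod]
  have hexp : exp ((∑ i ∈ s, x i : ℝ) * I) = ∏ i ∈ s, exp (x i * I) := by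
    rw [ofReal_sum, sum_mul, exp_sum]
  rw [hprod, hexp, mul_sum]
  refine (norm_prod_sub_prod_le_sum_norm_sub s _ _ (fun i _ => (norm_exp_ofReal_mul_I _).le)
    fun i _ => norm_one_add_mul_I_mul_exp_le_one _).trans (sum_le_sum fun i hi => ?_)
  calc _ ≤ 2 * |x i| ^ 3 :=
        norm_exp_mul_I_sub_one_add_mul_I_mul_exp_le ((hx i hi).trans hη)
    _ = 2 * |x i| * x i ^ 2 := by rw [← sq_abs]; ring
    _ ≤ 2 * η * x i ^ 2 := by
        gcongr
        exact hx i hi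

lemma abs_exp_neg_sub_exp_neg_le {u v : ℝ} (hu : 0 ≤ u) (hv : 0 ≤ v) :
    |Real.exp (-u) - Real.exp (-v)| ≤ min 1 |u - v| := by
  wlog huv : u ≤ v generalizing u v
  · rw [abs_sub_comm, abs_sub_comm u]
    exact this hv hu (le_of_not_ge huv)
  have hfactor : Real.exp (-v) = Real.exp (-u) * Real.exp (-(v - u)) := by
    rw [← Real.exp_add]; ring_nf
  have hle : Real.exp (-u) ≤ 1 := Real.exp_le_one_iff.2 (neg_nonpos.2 hu)
  have hmono : Real.exp (-v) ≤ Real.exp (-u) := Real.exp_le_exp.2 (neg_le_neg huv)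
  rw [abs_of_nonneg (sub_nonneg.2 hmono), abs_sub_comm u, abs_of_nonneg (sub_nonneg.2 huv)]
  refine le_min (by linarith [Real.exp_nonneg (-v)]) ?_
  have := Real.add_one_le_exp (-(v - u))
  nlinarith [Real.exp_nonneg (-u)]

/-- The sequence `x`, set to zero once the sum of the squares of the previous terms exceeds `N`. -/
def truncSq (N : ℝ) (x : ℕ → ℝ) (k : ℕ) : ℝ :=
  if ∑ j ∈ range k, x j ^ 2 ≤ N then x k else 0

lemma truncSq_eq_self {N : ℝ} {x : ℕ → ℝ} {n k : ℕ} (hN : ∑ j ∈ range n, x j ^ 2 ≤ N)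
    (hk : k ≤ n) : truncSq N x k = x k :=
  if_pos <| (sum_le_sum_of_subset_of_nonneg (range_subset_range.2 hk)
    fun _ _ _ => sq_nonneg _).trans hN

lemma sum_truncSq_sq_le {N η : ℝ} {x : ℕ → ℝ} (hN : 0 ≤ N) (hx : ∀ k, |x k| ≤ η) (n : ℕ) :
    ∑ k ∈ range n, truncSq N x k ^ 2 ≤ N + η ^ 2 := by
  induction n with
  | zero => simpa using add_nonneg hN (sq_nonneg η)
  | succ n ih =>
    rw [sum_range_succ]
    by_cases hle : ∑ j ∈ range n, x j ^ 2 ≤ N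
    · rw [truncSq_eq_self hle le_rfl, sum_congr rfl fun k hk => by
        rw [truncSq_eq_self hle (mem_range.1 hk).le]]
      exact add_le_add hle (sq_le_sq' (abs_le.1 (hx n)).1 (abs_le.1 (hx n)).2)
    · rw [truncSq, if_neg hle, zero_pow two_ne_zero, add_zero]
      exact ih

-- Before the truncation acts, `exp (-Q / 2)` may be replaced by `exp (-σ / 2)`, where `Q = ∑ x²`;
-- once it acts, `Q - σ > 1` and a crude bound suffices.
lemma norm_exp_sum_mul_I_sub_prod_truncSq_le {η σ : ℝ} {x : ℕ → ℝ} (hη : η ≤ 1) (hσ : 0 ≤ σ)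
    (hx : ∀ k, |x k| ≤ η) (n : ℕ) :
    ‖exp ((∑ k ∈ range n, x k : ℝ) * I)
        - (∏ k ∈ range n, (1 + truncSq (σ + 1) x k * I)) * Real.exp (-(σ / 2))‖
      ≤ 2 * η * (σ + 1)
        + (1 + Real.exp ((σ + 2) / 2)) * min 1 |∑ k ∈ range n, x k ^ 2 - σ| := by
  have hη0 : 0 ≤ η := (abs_nonneg _).trans (hx 0)
  have hmin : 0 ≤ min 1 |∑ k ∈ range n, x k ^ 2 - σ| := le_min zero_le_one (abs_nonneg _)
  have hprod := norm_prod_one_add_mul_I_le_exp (range n) (truncSq (σ + 1) x)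
  have hQ' : ∑ k ∈ range n, truncSq (σ + 1) x k ^ 2 ≤ σ + 2 := by
    have := sum_truncSq_sq_le (add_nonneg hσ zero_le_one) hx n
    nlinarith
  replace hprod := hprod.trans (Real.exp_le_exp.2 (div_le_div_of_nonneg_right hQ' zero_le_two))
  set Q := ∑ k ∈ range n, x k ^ 2
  have hQ0 : 0 ≤ Q := sum_nonneg fun _ _ => sq_nonneg _
  set Z := ∏ k ∈ range n, (1 + truncSq (σ + 1) x k * I) with hZ
  have hexp := abs_exp_neg_sub_exp_neg_le (div_nonneg hQ0 zero_le_two) (div_nonneg hσ zero_le_two)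
  by_cases hle : Q ≤ σ + 1
  · have hmain : ‖exp ((∑ k ∈ range n, x k : ℝ) * I) - Z * Real.exp (-(Q / 2))‖ ≤ 2 * η * Q := by
      rw [hZ, prod_congr rfl fun k hk => by rw [truncSq_eq_self hle (mem_range.1 hk).le]]
      exact norm_exp_sum_mul_I_sub_prod_le (range n) x hη fun k _ => hx k
    have hswap : ‖Z * Real.exp (-(Q / 2)) - Z * Real.exp (-(σ / 2))‖
        ≤ Real.exp ((σ + 2) / 2) * min 1 |Q - σ| := by
      rw [← mul_sub, norm_mul, ← ofReal_sub, norm_real, Real.norm_eq_abs]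
      refine mul_le_mul hprod (hexp.trans (min_le_min le_rfl ?_)) (abs_nonneg _)
        (Real.exp_nonneg _)
      rw [← sub_div, abs_div, abs_two]
      exact half_le_self (abs_nonneg _)
    refine (norm_sub_le_norm_sub_add_norm_sub _ (Z * Real.exp (-(Q / 2))) _).trans ?_
    have : 2 * η * Q ≤ 2 * η * (σ + 1) := by gcongr
    linarith
  · have hone : min 1 |Q - σ| = 1 := min_eq_left ((by linarith : 1 ≤ Q - σ).trans (le_abs_self _))
    have hσ1 : |Real.exp (-(σ / 2))| ≤ 1 := by
      rw [Real.abs_exp]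
      exact Real.exp_le_one_iff.2 (by linarith)
    rw [hone, mul_one]
    refine (norm_sub_le _ _).trans ?_
    rw [norm_exp_ofReal_mul_I, norm_mul, norm_real, Real.norm_eq_abs]
    have := mul_le_mul hprod hσ1 (abs_nonneg _) (Real.exp_nonneg _)
    have : 0 ≤ 2 * η * (σ + 1) := by positivity
    linarith

end CharacteristicExponential

section MartingaleDifferences

/-- A bounded function that is strongly measurable with respect to the σ-algebra `m`. Such functions
form an algebra of integrable functions, which settles all measurability and integrability
questions below. -/
structure BoundedMeasurable {R : Type*} [NormedRing R] (m : MeasurableSpace Ω) (f : Ω → R) :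
    Prop where
  stronglyMeasurable : StronglyMeasurable[m] f
  exists_norm_le : ∃ C, ∀ ω, ‖f ω‖ ≤ C

namespace BoundedMeasurable

variable {ι R : Type*} [NormedRing R] {m m0 : MeasurableSpace Ω} {f g : Ω → R}

lemma const (c : R) : BoundedMeasurable m fun _ : Ω => c :=
  ⟨stronglyMeasurable_const, ‖c‖, fun _ => le_rfl⟩

lemma mono (hf : BoundedMeasurable m f) (hm : m ≤ m0) : BoundedMeasurable m0 f :=
  ⟨hf.1.mono hm, hf.2⟩

lemma add (hf : BoundedMeasurable m f) (hg : BoundedMeasurable m g) :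
    BoundedMeasurable m fun ω => f ω + g ω := by
  obtain ⟨hf, C, hC⟩ := hf
  obtain ⟨hg, D, hD⟩ := hg
  exact ⟨hf.add hg, C + D, fun ω => norm_add_le_of_le (hC ω) (hD ω)⟩

lemma mul (hf : BoundedMeasurable m f) (hg : BoundedMeasurable m g) :
    BoundedMeasurable m fun ω => f ω * g ω := by
  obtain ⟨hf, C, hC⟩ := hf
  obtain ⟨hg, D, hD⟩ := hg
  exact ⟨hf.mul hg, C * D, fun ω => norm_mul_le_of_le (hC ω) (hD ω)⟩

lemma const_mul (hf : BoundedMeasurable m f) (c : R) : BoundedMeasurable m fun ω => c * f ω :=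
  (const c).mul hf

lemma sub (hf : BoundedMeasurable m f) (hg : BoundedMeasurable m g) :
    BoundedMeasurable m fun ω => f ω - g ω := by
  simpa only [neg_one_mul, sub_eq_add_neg] using hf.add (hg.const_mul (-1))

lemma pow (hf : BoundedMeasurable m f) (n : ℕ) : BoundedMeasurable m fun ω => f ω ^ n := by
  induction n with
  | zero => simpa only [pow_zero] using const 1
  | succ n ih => simpa only [pow_succ] using ih.mul hf

lemma sum {F : ι → Ω → R} (s : Finset ι) (hF : ∀ i ∈ s, BoundedMeasurable m (F i)) :
    BoundedMeasurable m fun ω => ∑ i ∈ s, F i ω := by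
  classical
  induction s using Finset.induction_on with
  | empty => simpa only [sum_empty] using const 0
  | insert i s hi ih =>
    rw [forall_mem_insert] at hF
    simpa only [sum_insert hi] using hF.1.add (ih hF.2)

lemma prod {R : Type*} [NormedCommRing R] {F : ι → Ω → R} (s : Finset ι)
    (hF : ∀ i ∈ s, BoundedMeasurable m (F i)) : BoundedMeasurable m fun ω => ∏ i ∈ s, F i ω := by
  classical
  induction s using Finset.induction_on with
  | empty => simpa only [prod_empty] using const 1
  | insert i s hi ih =>
    rw [forall_mem_insert] at hF
    simpa only [prod_insert hi] using hF.1.mul (ih hF.2)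

lemma comp_continuous {S : Type*} [NormedRing S] [ProperSpace R] {φ : R → S} (hφ : Continuous φ)
    (hf : BoundedMeasurable m f) : BoundedMeasurable m fun ω => φ (f ω) := by
  obtain ⟨hf, C, hC⟩ := hf
  obtain ⟨D, hD⟩ := (isCompact_closedBall (0 : R) C).exists_bound_of_continuousOn hφ.continuousOn
  exact ⟨hφ.comp_stronglyMeasurable hf, D, fun ω => hD _ (mem_closedBall_zero_iff.2 (hC ω))⟩

lemma integrable {μ : Measure Ω} [IsFiniteMeasure μ] (hf : BoundedMeasurable m0 f) :
    Integrable f μ := by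
  obtain ⟨hf, C, hC⟩ := hf
  exact .of_bound hf.aestronglyMeasurable C (.of_forall hC)

end BoundedMeasurable

variable {m0 : MeasurableSpace Ω} {μ : Measure Ω} {ℱ : Filtration ℕ m0} {d : ℕ → Ω → ℝ}

/-- A sequence of bounded martingale differences: `d k` is the increment between the times `k` and
`k + 1`, so it is `ℱ (k + 1)`-measurable and centred given `ℱ k`. -/
structure IsBoundedMDS (μ : Measure Ω) (ℱ : Filtration ℕ m0) (d : ℕ → Ω → ℝ) : Prop where
  boundedMeasurable_succ (k : ℕ) : BoundedMeasurable (ℱ (k + 1)) (d k)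
  condExp_eq_zero (k : ℕ) : μ[d k | ℱ k] =ᵐ[μ] 0

namespace IsBoundedMDS

lemma boundedMeasurable (h : IsBoundedMDS μ ℱ d) (k : ℕ) : BoundedMeasurable m0 (d k) :=
  (h.boundedMeasurable_succ k).mono (ℱ.le _)

lemma boundedMeasurable_of_lt (h : IsBoundedMDS μ ℱ d) {k n : ℕ} (hk : k < n) :
    BoundedMeasurable (ℱ n) (d k) :=
  (h.boundedMeasurable_succ k).mono (ℱ.mono hk)

lemma mul [IsFiniteMeasure μ] {g : ℕ → Ω → ℝ} (h : IsBoundedMDS μ ℱ d)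
    (hg : ∀ k, BoundedMeasurable (ℱ k) (g k)) : IsBoundedMDS μ ℱ fun k ω => g k ω * d k ω := by
  refine ⟨fun k => ((hg k).mono (ℱ.mono k.le_succ)).mul (h.boundedMeasurable_succ k), fun k => ?_⟩
  have hpull : μ[g k * d k | ℱ k] =ᵐ[μ] g k * μ[d k | ℱ k] :=
    condExp_mul_of_stronglyMeasurable_left (hg k).stronglyMeasurable
      (((hg k).mono (ℱ.le k)).mul (h.boundedMeasurable k)).integrable
      (h.boundedMeasurable k).integrable
  refine hpull.trans ?_
  filter_upwards [h.condExp_eq_zero k] with ω hω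
  simp [hω]

lemma const_mul [IsFiniteMeasure μ] (h : IsBoundedMDS μ ℱ d) (c : ℝ) :
    IsBoundedMDS μ ℱ fun k ω => c * d k ω :=
  h.mul fun _ => .const c

lemma integral_smul_eq_zero {R : Type*} [NormedRing R] [NormedAlgebra ℝ R] [CompleteSpace R]
    [IsFiniteMeasure μ] (h : IsBoundedMDS μ ℱ d) {k : ℕ} {g : Ω → R}
    (hg : BoundedMeasurable (ℱ k) g) :
    ∫ ω, d k ω • g ω ∂μ = 0 := by
  obtain ⟨C, hC⟩ := (h.boundedMeasurable k).exists_norm_le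
  have hdg : Integrable (d k • g) μ :=
    (hg.mono (ℱ.le k)).integrable.bdd_smul C
      (h.boundedMeasurable k).stronglyMeasurable.aestronglyMeasurable (.of_forall hC)
  have hpull := condExp_smul_of_aestronglyMeasurable_right (m := ℱ k)
    (h.boundedMeasurable k).integrable hdg hg.stronglyMeasurable.aestronglyMeasurable
  calc ∫ ω, d k ω • g ω ∂μ = ∫ ω, (μ[d k • g | ℱ k]) ω ∂μ := (integral_condExp (ℱ.le k)).symm
    _ = ∫ _, 0 ∂μ := by
        refine integral_congr_ae ?_
        filter_upwards [hpull, h.condExp_eq_zero k] with ω hω hzero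
        simp [hω, hzero]
    _ = 0 := integral_zero _ _

lemma integral_sum_sq [IsFiniteMeasure μ] (h : IsBoundedMDS μ ℱ d) (n : ℕ) :
    ∫ ω, (∑ k ∈ range n, d k ω) ^ 2 ∂μ = ∑ k ∈ range n, ∫ ω, d k ω ^ 2 ∂μ := by
  induction n with
  | zero => simp
  | succ n ih =>
    have hM : BoundedMeasurable (ℱ n) fun ω => ∑ k ∈ range n, d k ω :=
      .sum _ fun k hk => h.boundedMeasurable_of_lt (mem_range.1 hk)
    have hM0 := hM.mono (ℱ.le n)
    have hd := h.boundedMeasurable n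
    have hexpand (ω : Ω) : (∑ k ∈ range (n + 1), d k ω) ^ 2 = (∑ k ∈ range n, d k ω) ^ 2
        + d n ω • (2 * ∑ k ∈ range n, d k ω) + d n ω ^ 2 := by
      rw [sum_range_succ, smul_eq_mul]; ring
    have hcross : BoundedMeasurable m0 fun ω => d n ω • (2 * ∑ k ∈ range n, d k ω) :=
      hd.mul (hM0.const_mul 2)
    simp_rw [hexpand]
    rw [integral_add ((hM0.pow 2).add hcross).integrable (hd.pow 2).integrable,
      integral_add (hM0.pow 2).integrable hcross.integrable,
      h.integral_smul_eq_zero (hM.const_mul 2), ih, sum_range_succ, add_zero]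

lemma integral_prod_one_add_mul_I [IsProbabilityMeasure μ] (h : IsBoundedMDS μ ℱ d) (n : ℕ) :
    ∫ ω, ∏ k ∈ range n, (1 + d k ω * Complex.I) ∂μ = 1 := by
  have hfactor {m : MeasurableSpace Ω} {f : Ω → ℝ} (hf : BoundedMeasurable m f) :
      BoundedMeasurable m fun ω => 1 + f ω * Complex.I :=
    hf.comp_continuous (φ := fun x : ℝ => 1 + x * Complex.I) (by fun_prop)
  induction n with
  | zero => simp
  | succ n ih =>
    have hZ : BoundedMeasurable (ℱ n) fun ω => ∏ k ∈ range n, (1 + d k ω * Complex.I) :=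
      .prod _ fun k hk => hfactor (h.boundedMeasurable_of_lt (mem_range.1 hk))
    have hZI := hZ.mul (.const Complex.I)
    have hcross : BoundedMeasurable m0 fun ω =>
        d n ω • ((∏ k ∈ range n, (1 + d k ω * Complex.I)) * Complex.I) := by
      simp only [Complex.real_smul]
      exact ((h.boundedMeasurable n).comp_continuous Complex.continuous_ofReal).mul
        (hZI.mono (ℱ.le n))
    have hexpand (ω : Ω) : ∏ k ∈ range (n + 1), (1 + d k ω * Complex.I)
        = ∏ k ∈ range n, (1 + d k ω * Complex.I)
          + d n ω • ((∏ k ∈ range n, (1 + d k ω * Complex.I)) * Complex.I) := by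
      rw [prod_range_succ, Complex.real_smul]; ring
    simp_rw [hexpand]
    rw [integral_add (hZ.mono (ℱ.le n)).integrable hcross.integrable,
      h.integral_smul_eq_zero hZI, ih, add_zero]

protected lemma truncSq [IsFiniteMeasure μ] (h : IsBoundedMDS μ ℱ d) (N : ℝ) :
    IsBoundedMDS μ ℱ fun k ω => truncSq N (fun j => d j ω) k := by
  classical
  have hset (k : ℕ) : MeasurableSet[ℱ k] {ω | ∑ j ∈ range k, d j ω ^ 2 ≤ N} := by
    have hsum : BoundedMeasurable (ℱ k) fun ω => ∑ j ∈ range k, d j ω ^ 2 :=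
      .sum _ fun j hj => (h.boundedMeasurable_of_lt (mem_range.1 hj)).pow 2
    exact hsum.stronglyMeasurable.measurable measurableSet_Iic
  have hind (k : ℕ) : BoundedMeasurable (ℱ k)
      ({ω | ∑ j ∈ range k, d j ω ^ 2 ≤ N}.indicator fun _ => (1 : ℝ)) :=
    ⟨stronglyMeasurable_const.indicator (hset k), 1, fun ω =>
      (norm_indicator_le_norm_self _ ω).trans norm_one.le⟩
  convert h.mul hind using 3 with k ω
  simp [truncSq, Set.indicator_apply]

lemma norm_integral_exp_sum_mul_I_sub_le [IsProbabilityMeasure μ] {η σ : ℝ}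
    (h : IsBoundedMDS μ ℱ d) (hη : η ≤ 1) (hd : ∀ k ω, |d k ω| ≤ η) (hσ : 0 ≤ σ) (n : ℕ) :
    ‖∫ ω, Complex.exp ((∑ k ∈ range n, d k ω : ℝ) * Complex.I) ∂μ - Real.exp (-(σ / 2))‖
      ≤ 2 * η * (σ + 1)
        + (1 + Real.exp ((σ + 2) / 2)) * ∫ ω, min 1 |∑ k ∈ range n, d k ω ^ 2 - σ| ∂μ := by
  have htrunc := h.truncSq (σ + 1)
  have hS : BoundedMeasurable m0 fun ω => ∑ k ∈ range n, d k ω :=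
    .sum _ fun k _ => h.boundedMeasurable k
  have hQ : BoundedMeasurable m0 fun ω => ∑ k ∈ range n, d k ω ^ 2 :=
    .sum _ fun k _ => (h.boundedMeasurable k).pow 2
  have hexp : BoundedMeasurable m0 fun ω =>
      Complex.exp ((∑ k ∈ range n, d k ω : ℝ) * Complex.I) :=
    hS.comp_continuous (φ := fun x : ℝ => Complex.exp (x * Complex.I)) (by fun_prop)
  have hprod : BoundedMeasurable m0 fun ω =>
      (∏ k ∈ range n, (1 + truncSq (σ + 1) (fun j => d j ω) k * Complex.I))
        * Real.exp (-(σ / 2)) :=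
    .mul (.prod _ fun k _ => (htrunc.boundedMeasurable k).comp_continuous
      (φ := fun x : ℝ => 1 + x * Complex.I) (by fun_prop)) (.const _)
  have hmin : BoundedMeasurable m0 fun ω => min 1 |∑ k ∈ range n, d k ω ^ 2 - σ| :=
    hQ.comp_continuous (φ := fun q => min 1 |q - σ|) (by fun_prop)
  have hmean : ∫ ω, (∏ k ∈ range n, (1 + truncSq (σ + 1) (fun j => d j ω) k * Complex.I))
      * Real.exp (-(σ / 2)) ∂μ = Real.exp (-(σ / 2)) := by
    rw [integral_mul_const, htrunc.integral_prod_one_add_mul_I, one_mul]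
  rw [← hmean, ← integral_sub hexp.integrable hprod.integrable]
  calc _ ≤ ∫ ω, (2 * η * (σ + 1)
          + (1 + Real.exp ((σ + 2) / 2)) * min 1 |∑ k ∈ range n, d k ω ^ 2 - σ|) ∂μ :=
        norm_integral_le_of_norm_le ((BoundedMeasurable.const _).add (hmin.const_mul _)).integrable
          (.of_forall fun ω =>
            norm_exp_sum_mul_I_sub_prod_truncSq_le hη hσ (fun k => hd k ω) n)
    _ = _ := by
        rw [integral_add (integrable_const _) (hmin.const_mul _).integrable,
          integral_const, probReal_univ, one_smul, integral_const_mul]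

end IsBoundedMDS

end MartingaleDifferences

section CentralLimit

lemma tendsto_integral_of_tendstoInDistribution {ι Ω' E : Type*} {Ω : ι → Type*}
    {mΩ : ∀ i, MeasurableSpace (Ω i)} {mΩ' : MeasurableSpace Ω'} {μ : ∀ i, Measure (Ω i)}
    [∀ i, IsProbabilityMeasure (μ i)] {ν : Measure Ω'} [IsProbabilityMeasure ν] {l : Filter ι}
    [TopologicalSpace E] [MeasurableSpace E] [OpensMeasurableSpace E] {Y : ∀ i, Ω i → E}
    {Z : Ω' → E}
    (h : TendstoInDistribution Y l Z μ ν) (f : E →ᵇ ℝ) :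
    Tendsto (fun i => ∫ ω, f (Y i ω) ∂μ i) l (𝓝 (∫ ω, f (Z ω) ∂ν)) := by
  have hlim := ProbabilityMeasure.tendsto_iff_forall_integral_tendsto.1 h.tendsto f
  have hf {m : Measure E} : AEStronglyMeasurable f m :=
    f.continuous.measurable.stronglyMeasurable.aestronglyMeasurable
  simp only [ProbabilityMeasure.coe_mk, integral_map h.aemeasurable_limit hf] at hlim
  exact hlim.congr fun i => integral_map (h.forall_aemeasurable i) hf

lemma tendsto_integral_min_one_abs_sub {m0 : MeasurableSpace Ω} {μ : Measure Ω}
    [IsProbabilityMeasure μ] {f : ℕ → Ω → ℝ} {v : ℝ} (hf : ∀ n, AEMeasurable (f n) μ)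
    (hfv : TendstoInMeasure μ f atTop fun _ => v) (c : ℝ) :
    Tendsto (fun n => ∫ ω, min 1 |c * f n ω - c * v| ∂μ) atTop (𝓝 0) := by
  let g : ℝ →ᵇ ℝ := .ofNormedAddCommGroup (fun q => min 1 |c * q - c * v|) (by fun_prop) 1
    fun q => by
      rw [Real.norm_of_nonneg (le_min zero_le_one (abs_nonneg _))]
      exact min_le_left _ _
  simpa [g] using tendsto_integral_of_tendstoInDistribution
    (hfv.tendstoInDistribution_of_aemeasurable hf aemeasurable_const) g

namespace IsBoundedMDS

variable {m0 : MeasurableSpace Ω} {μ : Measure Ω} [IsProbabilityMeasure μ]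
  {ℱ : Filtration ℕ m0} {d : ℕ → Ω → ℝ}

lemma tendsto_integral_exp_sum_mul_I {C v : ℝ} {s : ℕ → ℝ} (h : IsBoundedMDS μ ℱ d)
    (hd : ∀ k ω, |d k ω| ≤ C) (hs : Tendsto s atTop atTop) (hv : 0 ≤ v)
    (hQ : TendstoInMeasure μ (fun n ω => (∑ k ∈ range n, d k ω ^ 2) / s n ^ 2) atTop fun _ => v)
    (t : ℝ) :
    Tendsto (fun n => ∫ ω, Complex.exp (t * ((∑ k ∈ range n, d k ω) / s n : ℝ) * Complex.I) ∂μ)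
      atTop (𝓝 (Real.exp (-(t ^ 2 * v / 2)))) := by
  have hη : Tendsto (fun n => |t| * C / s n) atTop (𝓝 0) := hs.const_div_atTop _
  have hmeas (n : ℕ) : AEMeasurable (fun ω => (∑ k ∈ range n, d k ω ^ 2) / s n ^ 2) μ := by
    have hsum : BoundedMeasurable m0 fun ω => ∑ k ∈ range n, d k ω ^ 2 :=
      .sum _ fun k _ => (h.boundedMeasurable k).pow 2
    exact (hsum.stronglyMeasurable.measurable.div_const _).aemeasurable
  have hbound := ((hη.const_mul 2).mul_const (t ^ 2 * v + 1)).add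
    ((tendsto_integral_min_one_abs_sub hmeas hQ (t ^ 2)).const_mul
      (1 + Real.exp ((t ^ 2 * v + 2) / 2)))
  rw [mul_zero, zero_mul, mul_zero, add_zero] at hbound
  rw [tendsto_iff_norm_sub_tendsto_zero]
  refine squeeze_zero' (.of_forall fun _ => norm_nonneg _) ?_ hbound
  filter_upwards [hs.eventually_gt_atTop 0, hη.eventually_le_const one_pos] with n hsn hηn
  have hscaled (k : ℕ) (ω : Ω) : |t / s n * d k ω| ≤ |t| * C / s n := by
    rw [abs_mul, abs_div, abs_of_pos hsn, div_mul_eq_mul_div]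
    gcongr
    exact hd k ω
  have hsum (ω : Ω) : ∑ k ∈ range n, t / s n * d k ω = t * ((∑ k ∈ range n, d k ω) / s n) := by
    rw [← mul_sum]
    ring
  have hsumsq (ω : Ω) : ∑ k ∈ range n, (t / s n * d k ω) ^ 2
      = t ^ 2 * ((∑ k ∈ range n, d k ω ^ 2) / s n ^ 2) := by
    simp_rw [mul_pow]
    rw [← mul_sum]
    ring
  simpa only [hsum, hsumsq, Complex.ofReal_mul] using
    (h.const_mul (t / s n)).norm_integral_exp_sum_mul_I_sub_le hηn hscaled
      (mul_nonneg (sq_nonneg t) hv) n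

theorem tendstoInDistribution_gaussianReal {C : ℝ} {v : ℝ≥0} {s : ℕ → ℝ} (h : IsBoundedMDS μ ℱ d)
    (hd : ∀ k ω, |d k ω| ≤ C) (hs : Tendsto s atTop atTop)
    (hQ : TendstoInMeasure μ (fun n ω => (∑ k ∈ range n, d k ω ^ 2) / s n ^ 2) atTop
      fun _ => (v : ℝ)) :
    TendstoInDistribution (fun n ω => (∑ k ∈ range n, d k ω) / s n) atTop id (fun _ => μ)
      (gaussianReal 0 v) := by
  have hmeas (n : ℕ) : AEMeasurable (fun ω => (∑ k ∈ range n, d k ω) / s n) μ := by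
    have hsum : BoundedMeasurable m0 fun ω => ∑ k ∈ range n, d k ω :=
      .sum _ fun k _ => h.boundedMeasurable k
    exact (hsum.stronglyMeasurable.measurable.div_const _).aemeasurable
  refine ⟨hmeas, aemeasurable_id, ProbabilityMeasure.tendsto_iff_tendsto_charFun.2 fun t => ?_⟩
  have hlim : charFun ((gaussianReal 0 v).map id) t = Real.exp (-(t ^ 2 * v / 2)) := by
    rw [Measure.map_id, charFun_gaussianReal]
    push_cast
    ring_nf
  simp only [ProbabilityMeasure.coe_mk, hlim]
  refine (h.tendsto_integral_exp_sum_mul_I hd hs v.2 hQ t).congr fun n => ?_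
  rw [charFun_apply_real, integral_map (hmeas n) (by fun_prop)]

end IsBoundedMDS

lemma tendstoInMeasure_of_tendsto_integral_abs_sub {ι : Type*} {l : Filter ι}
    {m0 : MeasurableSpace Ω} {μ : Measure Ω} {f : ι → Ω → ℝ} {g : Ω → ℝ}
    (hf : ∀ i, Integrable (f i) μ) (hg : Integrable g μ)
    (h : Tendsto (fun i => ∫ ω, |f i ω - g ω| ∂μ) l (𝓝 0)) : TendstoInMeasure μ f l g := by
  refine tendstoInMeasure_of_tendsto_eLpNorm one_ne_zero
    (fun i => (hf i).aestronglyMeasurable) hg.aestronglyMeasurable ?_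
  simp_rw [eLpNorm_one_eq_lintegral_enorm]
  have := ENNReal.tendsto_ofReal h
  rw [ENNReal.ofReal_zero] at this
  exact this.congr fun i => ofReal_integral_norm_eq_lintegral_enorm ((hf i).sub hg)

end CentralLimit

section RealEstimates

lemma exists_forall_le_mul_pow_of_succ_le {u : ℕ → ℝ} {b c : ℝ} {j : ℕ} (hu : ∀ k, 0 ≤ u k)
    (hc : c < j + 1) (hrec : ∀ k : ℕ, 1 ≤ k → u (k + 1) ≤ (1 + c / k) * u k + b * k ^ j) :
    ∃ C, 0 ≤ C ∧ ∀ k : ℕ, 1 ≤ k → u k ≤ C * k ^ (j + 1) := by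
  wlog hc0 : 0 ≤ c generalizing c
  · refine this (c := 0) (by positivity) (fun k hk => (hrec k hk).trans ?_) le_rfl
    have hle : c / k ≤ 0 / k := by gcongr; exact le_of_not_ge hc0
    have := hu k
    gcongr
  set C := max (u 1) (b / (j + 1 - c))
  have hC0 : 0 ≤ C := (hu 1).trans (le_max_left _ _)
  have hbC : c * C + b ≤ (j + 1) * C := by
    have := (div_le_iff₀ (sub_pos.2 hc)).1 (le_max_right (u 1) (b / (j + 1 - c)))
    linarith
  refine ⟨C, hC0, fun k hk => ?_⟩
  induction k, hk using Nat.le_induction with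
  | base => rw [Nat.cast_one, one_pow, mul_one]; exact le_max_left _ _
  | succ k hk ih =>
    have hk0 : (0 : ℝ) < k := by exact_mod_cast hk
    have hbinom : (k : ℝ) ^ (j + 1) + (j + 1) * k ^ j ≤ (k + 1) ^ (j + 1) := by
      have h := one_add_mul_le_pow (a := 1 / (k : ℝ)) (by linarith [one_div_pos.2 hk0]) (j + 1)
      calc (k : ℝ) ^ (j + 1) + (j + 1) * k ^ j
          = k ^ (j + 1) * (1 + (j + 1 : ℕ) * (1 / k)) := by push_cast; field_simp; ring
        _ ≤ k ^ (j + 1) * (1 + 1 / k) ^ (j + 1) := by gcongr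
        _ = (k + 1) ^ (j + 1) := by
          rw [← mul_pow, mul_add, mul_one, mul_one_div_cancel hk0.ne']
    calc u (k + 1) ≤ (1 + c / k) * u k + b * k ^ j := hrec k hk
      _ ≤ (1 + c / k) * (C * k ^ (j + 1)) + b * k ^ j := by gcongr
      _ = C * k ^ (j + 1) + (c * C + b) * k ^ j := by field_simp; ring
      _ ≤ C * k ^ (j + 1) + (j + 1) * C * k ^ j := by gcongr
      _ = C * (k ^ (j + 1) + (j + 1) * k ^ j) := by ring
      _ ≤ C * ((k + 1 : ℕ) : ℝ) ^ (j + 1) := by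
          push_cast
          gcongr

lemma one_sub_sq_le_one_sub_sq_mul_sq {a x : ℝ} (hx : |x| ≤ 1) :
    1 - a ^ 2 ≤ 1 - a ^ 2 * x ^ 2 :=
  sub_le_sub_left (mul_le_of_le_one_right (sq_nonneg a) ((sq_le_one_iff_abs_le_one x).2 hx)) 1

lemma abs_sq_sub_sq_le_mul_abs_cube {a x y : ℝ} (ha : |a| < 1) (hx : |x| ≤ 1) (hy : |y| = 1) :
    |(x / (1 - a ^ 2 * x ^ 2) * (y - a * x)) ^ 2 - x ^ 2|
      ≤ 6 / (1 - a ^ 2) ^ 2 * |x| ^ 3 := by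
  have ha2 : 0 < 1 - a ^ 2 := sub_pos.2 ((sq_lt_one_iff_abs_lt_one a).2 ha)
  have hD := one_sub_sq_le_one_sub_sq_mul_sq (a := a) hx
  have hD0 : 0 < 1 - a ^ 2 * x ^ 2 := ha2.trans_le hD
  have hfactor : (x / (1 - a ^ 2 * x ^ 2) * (y - a * x)) ^ 2 - x ^ 2
      = x ^ 2 * x * (-2 * a * y + 3 * a ^ 2 * x - a ^ 4 * x ^ 3) / (1 - a ^ 2 * x ^ 2) ^ 2 := by
    have hy2 : y ^ 2 = 1 := by rw [← sq_abs, hy, one_pow]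
    rw [eq_div_iff (pow_ne_zero 2 hD0.ne'), sub_mul, ← mul_pow, mul_right_comm,
      div_mul_cancel₀ _ hD0.ne']
    linear_combination x ^ 2 * hy2
  have hbracket : |-2 * a * y + 3 * a ^ 2 * x - a ^ 4 * x ^ 3| ≤ 6 :=
    calc |-2 * a * y + 3 * a ^ 2 * x - a ^ 4 * x ^ 3|
        ≤ |-2 * a * y| + |3 * a ^ 2 * x| + |a ^ 4 * x ^ 3| :=
          (abs_sub _ _).trans (add_le_add_left (abs_add_le _ _) _)
      _ = 2 * |a| + 3 * |a| ^ 2 * |x| + |a| ^ 4 * |x| ^ 3 := by simp [abs_mul, abs_pow, hy]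
      _ ≤ 2 * 1 + 3 * 1 ^ 2 * 1 + 1 ^ 4 * 1 ^ 3 := by gcongr
      _ = 6 := by norm_num
  rw [hfactor, abs_div, abs_mul, abs_mul, abs_of_nonneg (sq_nonneg x), abs_of_pos (pow_pos hD0 2),
    div_mul_eq_mul_div, ← sq_abs x, ← pow_succ, mul_comm, sq_abs]
  exact div_le_div₀ (by positivity) (by gcongr) (pow_pos ha2 2) (by gcongr)

lemma abs_le_add_sq_div (x : ℝ) {r : ℝ} (hr : 0 < r) : |x| ≤ r + x ^ 2 / r := by
  rw [← sq_abs, add_div' _ _ _ hr.ne', le_div_iff₀ hr]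
  nlinarith [sq_nonneg (r - |x|), mul_nonneg (abs_nonneg x) hr.le]

lemma abs_cube_le_sq_div_add_mul_pow_four (x : ℝ) {r : ℝ} (hr : 0 < r) :
    |x| ^ 3 ≤ x ^ 2 / r + r * x ^ 4 := by
  have hamgm : |x| ≤ 1 / r + r * x ^ 2 := by
    simpa only [div_div_eq_mul_div, div_one, mul_comm] using abs_le_add_sq_div x (one_div_pos.2 hr)
  calc |x| ^ 3 = x ^ 2 * |x| := by rw [← sq_abs]; ring
    _ ≤ x ^ 2 * (1 / r + r * x ^ 2) := by gcongr
    _ = x ^ 2 / r + r * x ^ 4 := by ring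

lemma sum_one_div_add_one_eq_harmonic (n : ℕ) :
    ∑ k ∈ range n, 1 / ((k : ℝ) + 1) = harmonic n := by
  simp [harmonic]

lemma sum_one_div_add_one_sq_le_two (n : ℕ) : ∑ k ∈ range n, 1 / ((k : ℝ) + 1) ^ 2 ≤ 2 := by
  have hIoo : Ioo 0 (n + 1) = Ico (0 + 1) (n + 1) := rfl
  have h := sum_Ioo_inv_sq_le (α := ℝ) 0 (n + 1)
  rw [hIoo, ← sum_Ico_add' (fun i : ℕ => ((i : ℝ) ^ 2)⁻¹), ← range_eq_Ico] at h
  simpa using h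

lemma abs_harmonic_sub_log_le_one {n : ℕ} (hn : n ≠ 0) : |(harmonic n : ℝ) - Real.log n| ≤ 1 := by
  have hlower := log_add_one_le_harmonic n
  have hupper := harmonic_le_one_add_log n
  have hlog : Real.log n ≤ Real.log ((n + 1 : ℕ) : ℝ) :=
    Real.log_le_log (by positivity) (by push_cast; linarith)
  rw [abs_le]
  constructor <;> linarith

lemma tendsto_sqrt_log_atTop : Tendsto (fun n : ℕ => √(Real.log n)) atTop atTop :=
  Real.tendsto_sqrt_atTop.comp (Real.tendsto_log_atTop.comp tendsto_natCast_atTop_atTop)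

end RealEstimates

section ElephantRandomWalk

/-- The proportion `S k / k`, the regressor of the step `X (k + 1)`; it is `0` at `k = 0`. -/
def erwMean (X : ℕ → Ω → ℝ) (k : ℕ) (ω : Ω) : ℝ :=
  erwS X k ω / k

/-- The innovation `ε (k + 1) = X (k + 1) - a S k / k`, indexed by the time `k` of the regressor. -/
def erwNoise (X : ℕ → Ω → ℝ) (a : ℝ) (k : ℕ) (ω : Ω) : ℝ :=
  X (k + 1) ω - a * erwMean X k ω

/-- The predictable factor `(S k / k) / (1 - a² (S k / k)²)` multiplying the innovation in the
score. -/
def erwScore (X : ℕ → Ω → ℝ) (a : ℝ) (k : ℕ) (ω : Ω) : ℝ :=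
  erwMean X k ω / (1 - a ^ 2 * erwMean X k ω ^ 2)

/-- The martingale part of the Doob decomposition of `S n ^ 2 / n`. -/
def erwSqMartingale (X : ℕ → Ω → ℝ) (a : ℝ) (n : ℕ) (ω : Ω) : ℝ :=
  ∑ k ∈ range n, 2 * (k / (k + 1) : ℝ) * erwMean X k ω * erwNoise X a k ω

lemma erwMean_zero (X : ℕ → Ω → ℝ) : erwMean X 0 = 0 := by
  ext ω
  simp [erwMean]

lemma erwS_succ (X : ℕ → Ω → ℝ) (k : ℕ) (ω : Ω) :
    erwS X (k + 1) ω = erwS X k ω + X (k + 1) ω :=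
  sum_Icc_succ_top (Nat.le_add_left 1 k) _

lemma erwP_eq_sum_range (X : ℕ → Ω → ℝ) (a : ℝ) (n : ℕ) (ω : Ω) :
    erwP X a n ω = ∑ k ∈ range n, erwScore X a k ω * erwNoise X a k ω := by
  have hterm (k : ℕ) : erwS X k ω / k * (X (k + 1) ω - a * (erwS X k ω / k))
      / (1 - a ^ 2 * (erwS X k ω / k) ^ 2) = erwScore X a k ω * erwNoise X a k ω :=
    mul_div_right_comm _ _ _
  simp_rw [erwP, hterm]
  refine sum_subset (fun k hk => ?_) fun k hk hk' => ?_
  · rw [mem_Icc] at hk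
    exact mem_range.2 (by lia)
  · rw [mem_Icc] at hk'
    obtain rfl : k = 0 := by have := mem_range.1 hk; lia
    simp [erwScore, erwMean_zero]

namespace IsERW

variable {m0 : MeasurableSpace Ω} {μ : Measure Ω} {ℱ : Filtration ℕ m0} {X : ℕ → Ω → ℝ} {p : ℝ}

lemma eq_one_or_eq_neg_one (h : IsERW μ ℱ X p) (k : ℕ) (ω : Ω) :
    X (k + 1) ω = 1 ∨ X (k + 1) ω = -1 :=
  h.2.2.1 (k + 1) (Nat.le_add_left 1 k) ω

lemma abs_step (h : IsERW μ ℱ X p) (k : ℕ) (ω : Ω) : |X (k + 1) ω| = 1 := by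
  rcases h.eq_one_or_eq_neg_one k ω with hX | hX <;> simp [hX]

lemma step_sq (h : IsERW μ ℱ X p) (k : ℕ) (ω : Ω) : X (k + 1) ω ^ 2 = 1 := by
  rw [← sq_abs, h.abs_step, one_pow]

lemma abs_erwS_le (h : IsERW μ ℱ X p) (k : ℕ) (ω : Ω) : |erwS X k ω| ≤ k := by
  induction k with
  | zero => simp [erwS]
  | succ k ih =>
    rw [erwS_succ, Nat.cast_succ]
    exact (abs_add_le _ _).trans (add_le_add ih (h.abs_step k ω).le)

lemma abs_erwMean_le_one (h : IsERW μ ℱ X p) (k : ℕ) (ω : Ω) : |erwMean X k ω| ≤ 1 := by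
  rw [erwMean, abs_div, Nat.abs_cast]
  exact div_le_one_of_le₀ (h.abs_erwS_le k ω) (Nat.cast_nonneg k)

lemma abs_memory_le_one (h : IsERW μ ℱ X p) : |2 * p - 1| ≤ 1 :=
  abs_le.2 ⟨by linarith [h.1], by linarith [h.2.1]⟩

lemma abs_erwNoise_le_two (h : IsERW μ ℱ X p) (k : ℕ) (ω : Ω) :
    |erwNoise X (2 * p - 1) k ω| ≤ 2 := by
  have hdrift : |(2 * p - 1) * erwMean X k ω| ≤ 1 := by
    rw [abs_mul]
    exact mul_le_one₀ h.abs_memory_le_one (abs_nonneg _) (h.abs_erwMean_le_one k ω)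
  calc |erwNoise X (2 * p - 1) k ω| ≤ |X (k + 1) ω| + |(2 * p - 1) * erwMean X k ω| := abs_sub _ _
    _ ≤ 1 + 1 := add_le_add (h.abs_step k ω).le hdrift
    _ = 2 := one_add_one_eq_two

lemma boundedMeasurable_step (h : IsERW μ ℱ X p) (k : ℕ) :
    BoundedMeasurable (ℱ (k + 1)) (X (k + 1)) :=
  ⟨(h.2.2.2.1 _ (Nat.le_add_left 1 k)).stronglyMeasurable, 1, fun ω => (h.abs_step k ω).le⟩

lemma boundedMeasurable_erwS (h : IsERW μ ℱ X p) (k : ℕ) : BoundedMeasurable (ℱ k) (erwS X k) := by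
  refine .sum _ fun i hi => ?_
  obtain ⟨hi1, hik⟩ := mem_Icc.1 hi
  obtain ⟨j, rfl⟩ := Nat.exists_eq_succ_of_ne_zero (Nat.one_le_iff_ne_zero.1 hi1)
  exact (h.boundedMeasurable_step j).mono (ℱ.mono hik)

lemma boundedMeasurable_erwMean (h : IsERW μ ℱ X p) (k : ℕ) :
    BoundedMeasurable (ℱ k) (erwMean X k) := by
  have hx : erwMean X k = fun ω => (k : ℝ)⁻¹ * erwS X k ω := funext fun ω => div_eq_inv_mul _ _
  exact hx ▸ (h.boundedMeasurable_erwS k).const_mul _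

lemma boundedMeasurable_erwNoise (h : IsERW μ ℱ X p) (k : ℕ) :
    BoundedMeasurable (ℱ (k + 1)) (erwNoise X (2 * p - 1) k) :=
  (h.boundedMeasurable_step k).sub
    (((h.boundedMeasurable_erwMean k).mono (ℱ.mono k.le_succ)).const_mul _)

lemma condExp_erwNoise [IsFiniteMeasure μ] (h : IsERW μ ℱ X p) {k : ℕ} (hk : 1 ≤ k) :
    μ[erwNoise X (2 * p - 1) k | ℱ k] =ᵐ[μ] 0 := by
  have hdrift := (h.boundedMeasurable_erwMean k).const_mul (2 * p - 1)
  have hsub := condExp_sub ((h.boundedMeasurable_step k).mono (ℱ.le _)).integrable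
    (hdrift.mono (ℱ.le k)).integrable (ℱ k) (μ := μ)
  rw [condExp_of_stronglyMeasurable (ℱ.le k) hdrift.stronglyMeasurable
    (hdrift.mono (ℱ.le k)).integrable] at hsub
  refine hsub.trans ?_
  filter_upwards [h.2.2.2.2 k hk] with ω hω
  simp [hω, erwMean]

-- The law of the first step is unrestricted, so the innovation at time `0` must be discarded.
lemma isBoundedMDS_update_erwNoise [IsFiniteMeasure μ] (h : IsERW μ ℱ X p) :
    IsBoundedMDS μ ℱ (Function.update (erwNoise X (2 * p - 1)) 0 0) := by
  refine ⟨fun k => ?_, fun k => ?_⟩ <;> rcases eq_or_ne k 0 with rfl | hk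
  · exact .const 0
  · simpa only [Function.update_of_ne hk] using h.boundedMeasurable_erwNoise k
  · simp [condExp_zero]
  · simpa only [Function.update_of_ne hk] using h.condExp_erwNoise (Nat.one_le_iff_ne_zero.2 hk)

lemma isBoundedMDS_mul_erwNoise [IsFiniteMeasure μ] (h : IsERW μ ℱ X p) {g : ℕ → Ω → ℝ}
    (hg : ∀ k, BoundedMeasurable (ℱ k) (g k)) (hg0 : g 0 = 0) :
    IsBoundedMDS μ ℱ fun k ω => g k ω * erwNoise X (2 * p - 1) k ω := by
  convert h.isBoundedMDS_update_erwNoise.mul hg using 3 with k ω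
  rcases eq_or_ne k 0 with rfl | hk
  · simp [hg0]
  · rw [Function.update_of_ne hk]

lemma abs_erwScore_le (h : IsERW μ ℱ X p) {a : ℝ} (ha : |a| < 1) (k : ℕ) (ω : Ω) :
    |erwScore X a k ω| ≤ (1 - a ^ 2)⁻¹ := by
  have ha2 : 0 < 1 - a ^ 2 := sub_pos.2 ((sq_lt_one_iff_abs_lt_one a).2 ha)
  have hD := one_sub_sq_le_one_sub_sq_mul_sq (a := a) (h.abs_erwMean_le_one k ω)
  rw [erwScore, abs_div, abs_of_pos (ha2.trans_le hD), ← one_div]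
  exact div_le_div₀ zero_le_one (h.abs_erwMean_le_one k ω) ha2 hD

lemma boundedMeasurable_erwScore (h : IsERW μ ℱ X p) {a : ℝ} (ha : |a| < 1) (k : ℕ) :
    BoundedMeasurable (ℱ k) (erwScore X a k) := by
  have hx : Measurable[ℱ k] (erwMean X k) :=
    (h.boundedMeasurable_erwMean k).stronglyMeasurable.measurable
  exact ⟨(hx.div (((hx.pow_const 2).const_mul _).const_sub 1)).stronglyMeasurable,
    (1 - a ^ 2)⁻¹, h.abs_erwScore_le ha k⟩

lemma isBoundedMDS_erwScore_mul_erwNoise [IsFiniteMeasure μ] (h : IsERW μ ℱ X p)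
    (ha : |2 * p - 1| < 1) :
    IsBoundedMDS μ ℱ fun k ω => erwScore X (2 * p - 1) k ω * erwNoise X (2 * p - 1) k ω :=
  h.isBoundedMDS_mul_erwNoise (h.boundedMeasurable_erwScore ha) <| by
    ext ω
    simp [erwScore, erwMean_zero]

lemma integral_erwS_pow_mul_step [IsFiniteMeasure μ] (h : IsERW μ ℱ X p) {k : ℕ} (hk : 1 ≤ k)
    (j : ℕ) :
    ∫ ω, erwS X k ω ^ j * X (k + 1) ω ∂μ = (2 * p - 1) / k * ∫ ω, erwS X k ω ^ (j + 1) ∂μ := by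
  have hS := h.boundedMeasurable_erwS k
  have hnoise := h.isBoundedMDS_update_erwNoise.integral_smul_eq_zero (hS.pow j)
  rw [Function.update_of_ne (Nat.one_le_iff_ne_zero.1 hk)] at hnoise
  have hsplit (ω : Ω) : erwS X k ω ^ j * X (k + 1) ω
      = erwNoise X (2 * p - 1) k ω • erwS X k ω ^ j
        + (2 * p - 1) / k * erwS X k ω ^ (j + 1) := by
    rw [erwNoise, erwMean, smul_eq_mul]
    ring
  have hcross : BoundedMeasurable m0 fun ω => erwNoise X (2 * p - 1) k ω • erwS X k ω ^ j :=
    ((h.boundedMeasurable_erwNoise k).mono (ℱ.le _)).mul ((hS.pow j).mono (ℱ.le k))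
  simp_rw [hsplit]
  rw [integral_add hcross.integrable (((hS.pow _).const_mul _).mono (ℱ.le k)).integrable, hnoise,
    zero_add, integral_const_mul]

lemma exists_integral_erwS_sq_le [IsProbabilityMeasure μ] (h : IsERW μ ℱ X p) (hp : p < 3 / 4) :
    ∃ C, 0 ≤ C ∧ ∀ k : ℕ, 1 ≤ k → ∫ ω, erwS X k ω ^ 2 ∂μ ≤ C * k := by
  have hrec (k : ℕ) (hk : 1 ≤ k) : ∫ ω, erwS X (k + 1) ω ^ 2 ∂μ
      ≤ (1 + 2 * (2 * p - 1) / k) * ∫ ω, erwS X k ω ^ 2 ∂μ + 1 * (k : ℝ) ^ 0 := by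
    have hS := (h.boundedMeasurable_erwS k).mono (ℱ.le k)
    have hSX := hS.mul ((h.boundedMeasurable_step k).mono (ℱ.le _))
    have hexpand (ω : Ω) : erwS X (k + 1) ω ^ 2
        = erwS X k ω ^ 2 + 2 * (erwS X k ω * X (k + 1) ω) + 1 := by
      rw [erwS_succ]
      linear_combination h.step_sq k ω
    have hcross := h.integral_erwS_pow_mul_step hk 1
    simp only [pow_one] at hcross
    simp_rw [hexpand]
    rw [integral_add ((hS.pow 2).add (hSX.const_mul 2)).integrable (integrable_const _),
      integral_add (hS.pow 2).integrable (hSX.const_mul 2).integrable, integral_const_mul, hcross,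
      integral_const, probReal_univ, one_smul]
    exact le_of_eq (by ring)
  obtain ⟨C, hC0, hC⟩ := exists_forall_le_mul_pow_of_succ_le
    (fun k => integral_nonneg fun ω => sq_nonneg (erwS X k ω))
    (by rw [Nat.cast_zero]; linarith) hrec
  exact ⟨C, hC0, fun k hk => by simpa only [zero_add, pow_one] using hC k hk⟩

lemma exists_integral_erwS_pow_four_le [IsProbabilityMeasure μ] (h : IsERW μ ℱ X p)
    (hp : p < 3 / 4) :
    ∃ C, 0 ≤ C ∧ ∀ k : ℕ, 1 ≤ k → ∫ ω, erwS X k ω ^ 4 ∂μ ≤ C * k ^ 2 := by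
  obtain ⟨C₂, -, hC₂⟩ := h.exists_integral_erwS_sq_le hp
  refine exists_forall_le_mul_pow_of_succ_le (b := 8 * C₂ + 3) (c := 4 * (2 * p - 1)) (j := 1)
    (fun k => integral_nonneg fun ω => by positivity) (by rw [Nat.cast_one]; linarith)
    fun k hk => ?_
  have hS := (h.boundedMeasurable_erwS k).mono (ℱ.le k)
  have hSX := ((hS.pow 3).mul ((h.boundedMeasurable_step k).mono (ℱ.le _))).const_mul 4
  have hexpand (ω : Ω) : erwS X (k + 1) ω ^ 4
      ≤ erwS X k ω ^ 4 + 4 * (erwS X k ω ^ 3 * X (k + 1) ω) + 8 * erwS X k ω ^ 2 + 3 := by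
    have hX := h.step_sq k ω
    have hexact : erwS X (k + 1) ω ^ 4 = erwS X k ω ^ 4 + 4 * (erwS X k ω ^ 3 * X (k + 1) ω)
        + 6 * erwS X k ω ^ 2 + 4 * erwS X k ω * X (k + 1) ω + 1 := by
      rw [erwS_succ]
      linear_combination (6 * erwS X k ω ^ 2 + 4 * erwS X k ω * X (k + 1) ω
        + X (k + 1) ω ^ 2 + 1) * hX
    linarith [sq_nonneg (erwS X k ω - X (k + 1) ω)]
  have hk1 : (1 : ℝ) ≤ k := by exact_mod_cast hk
  calc ∫ ω, erwS X (k + 1) ω ^ 4 ∂μ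
      ≤ ∫ ω, (erwS X k ω ^ 4 + 4 * (erwS X k ω ^ 3 * X (k + 1) ω)
          + 8 * erwS X k ω ^ 2 + 3) ∂μ :=
        integral_mono (((h.boundedMeasurable_erwS _).mono (ℱ.le _)).pow 4).integrable
          ((((hS.pow 4).add hSX).add ((hS.pow 2).const_mul 8)).add (.const 3)).integrable hexpand
    _ = (1 + 4 * (2 * p - 1) / k) * ∫ ω, erwS X k ω ^ 4 ∂μ
          + 8 * ∫ ω, erwS X k ω ^ 2 ∂μ + 3 := by
        rw [integral_add (((hS.pow 4).add hSX).add ((hS.pow 2).const_mul 8)).integrable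
            (integrable_const _),
          integral_add ((hS.pow 4).add hSX).integrable ((hS.pow 2).const_mul 8).integrable,
          integral_add (hS.pow 4).integrable hSX.integrable, integral_const_mul,
          integral_const_mul, h.integral_erwS_pow_mul_step hk 3, integral_const, probReal_univ,
          one_smul]
        ring
    _ ≤ (1 + 4 * (2 * p - 1) / k) * ∫ ω, erwS X k ω ^ 4 ∂μ + (8 * C₂ + 3) * k ^ 1 := by
        rw [pow_one]
        linarith [hC₂ k hk]

lemma integral_erwMean_pow_le {j : ℕ} {C : ℝ} (hj : j ≠ 0) (hC0 : 0 ≤ C)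
    (hC : ∀ k : ℕ, 1 ≤ k → ∫ ω, erwS X k ω ^ (2 * j) ∂μ ≤ C * k ^ j) (k : ℕ) :
    ∫ ω, erwMean X k ω ^ (2 * j) ∂μ ≤ 2 ^ j * C * (1 / (k + 1) ^ j) := by
  rcases Nat.eq_zero_or_pos k with rfl | hk
  · simp only [erwMean_zero, Pi.zero_apply, ne_eq, mul_eq_zero, OfNat.ofNat_ne_zero, hj, or_self,
      not_false_eq_true, zero_pow, integral_zero]
    positivity
  have hk1 : (1 : ℝ) ≤ k := by exact_mod_cast hk
  calc ∫ ω, erwMean X k ω ^ (2 * j) ∂μ = (∫ ω, erwS X k ω ^ (2 * j) ∂μ) / k ^ (2 * j) := by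
        simp_rw [erwMean, div_pow]
        exact integral_div _ _
    _ ≤ C * k ^ j / k ^ (2 * j) := by gcongr; exact hC k hk
    _ = 2 ^ j * C * (1 / (k + k) ^ j) := by
        rw [← two_mul (k : ℝ), mul_pow]
        field_simp
        ring
    _ ≤ 2 ^ j * C * (1 / (k + 1) ^ j) := by gcongr

lemma exists_integral_erwMean_sq_le [IsProbabilityMeasure μ] (h : IsERW μ ℱ X p)
    (hp : p < 3 / 4) :
    ∃ C, 0 ≤ C ∧ ∀ k : ℕ, ∫ ω, erwMean X k ω ^ 2 ∂μ ≤ C * (1 / (k + 1)) := by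
  obtain ⟨C, hC0, hC⟩ := h.exists_integral_erwS_sq_le hp
  refine ⟨2 ^ 1 * C, by positivity, fun k => ?_⟩
  simpa only [mul_one, pow_one] using
    integral_erwMean_pow_le one_ne_zero hC0 (by simpa only [mul_one, pow_one] using hC) k

lemma exists_integral_erwMean_pow_four_le [IsProbabilityMeasure μ] (h : IsERW μ ℱ X p)
    (hp : p < 3 / 4) :
    ∃ C, 0 ≤ C ∧ ∀ k : ℕ, ∫ ω, erwMean X k ω ^ 4 ∂μ ≤ C * (1 / (k + 1) ^ 2) := by
  obtain ⟨C, hC0, hC⟩ := h.exists_integral_erwS_pow_four_le hp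
  exact ⟨2 ^ 2 * C, by positivity, integral_erwMean_pow_le two_ne_zero hC0 hC⟩

lemma mul_sum_erwMean_sq_eq (h : IsERW μ ℱ X p) (n : ℕ) (ω : Ω) :
    (3 - 4 * p) * ∑ k ∈ range n, erwMean X k ω ^ 2 * (k / (k + 1) : ℝ)
      = ∑ k ∈ range n, 1 / ((k : ℝ) + 1) - erwS X n ω ^ 2 / n
        + erwSqMartingale X (2 * p - 1) n ω := by
  induction n with
  | zero => simp [erwS, erwSqMartingale]
  | succ n ih =>
    rw [sum_range_succ, sum_range_succ, mul_add, ih, erwS_succ, erwSqMartingale,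
      erwSqMartingale, sum_range_succ, erwNoise]
    have hX := h.step_sq n ω
    rcases Nat.eq_zero_or_pos n with rfl | hn
    · rw [zero_add] at hX
      simp [erwMean_zero, erwS, hX]
    · rw [erwMean]
      push_cast
      field_simp
      linear_combination (n : ℝ) * hX

lemma abs_sum_sq_sub_log_le (h : IsERW μ ℱ X p) (ha : |2 * p - 1| < 1) (hp : p < 3 / 4) {n : ℕ}
    (hn : n ≠ 0) (ω : Ω) :
    |∑ k ∈ range n, (erwScore X (2 * p - 1) k ω * erwNoise X (2 * p - 1) k ω) ^ 2
        - Real.log n / (3 - 4 * p)|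
      ≤ 6 / (1 - (2 * p - 1) ^ 2) ^ 2 * ∑ k ∈ range n, |erwMean X k ω| ^ 3
        + ∑ k ∈ range n, erwMean X k ω ^ 2 * (1 / (k + 1))
        + (1 + erwS X n ω ^ 2 / n + |erwSqMartingale X (2 * p - 1) n ω|) / (3 - 4 * p) := by
  have hc : 0 < 3 - 4 * p := by linarith
  set U := erwS X n ω ^ 2 / n
  set M := erwSqMartingale X (2 * p - 1) n ω
  set Q := ∑ k ∈ range n, (erwScore X (2 * p - 1) k ω * erwNoise X (2 * p - 1) k ω) ^ 2
  set V := ∑ k ∈ range n, erwMean X k ω ^ 2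
  set V' := ∑ k ∈ range n, erwMean X k ω ^ 2 * (1 / (k + 1) : ℝ)
  have hV' : 0 ≤ V' := sum_nonneg fun k _ => by positivity
  have hU : 0 ≤ U := by positivity
  have hQ : |Q - V| ≤ 6 / (1 - (2 * p - 1) ^ 2) ^ 2 * ∑ k ∈ range n, |erwMean X k ω| ^ 3 := by
    rw [← sum_sub_distrib, mul_sum]
    exact (abs_sum_le_sum_abs _ _).trans <| sum_le_sum fun k _ =>
      abs_sq_sub_sq_le_mul_abs_cube ha (h.abs_erwMean_le_one k ω) (h.abs_step k ω)
  have hV : V - V' = ((harmonic n : ℝ) - U + M) / (3 - 4 * p) := by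
    rw [eq_div_iff hc.ne', ← sum_one_div_add_one_eq_harmonic, ← h.mul_sum_erwMean_sq_eq, mul_comm,
      ← sum_sub_distrib]
    congr 1
    refine sum_congr rfl fun k _ => ?_
    field_simp
    ring
  have hdrift : |(harmonic n : ℝ) - Real.log n - U + M| ≤ 1 + U + |M| :=
    (abs_add_le _ _).trans <| add_le_add_left ((abs_sub _ _).trans <|
      add_le_add (abs_harmonic_sub_log_le_one hn) (abs_of_nonneg hU).le) _
  calc |Q - Real.log n / (3 - 4 * p)|
      = |(Q - V) + V' + ((harmonic n : ℝ) - Real.log n - U + M) / (3 - 4 * p)| := by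
        congr 1
        linear_combination hV
    _ ≤ |Q - V| + |V'| + |((harmonic n : ℝ) - Real.log n - U + M) / (3 - 4 * p)| :=
        abs_add_three _ _ _
    _ ≤ _ := by
        rw [abs_of_nonneg hV', abs_div, abs_of_pos hc]
        gcongr

lemma boundedMeasurable_erwSqMartingale (h : IsERW μ ℱ X p) (n : ℕ) :
    BoundedMeasurable (ℱ n) (erwSqMartingale X (2 * p - 1) n) :=
  .sum _ fun k hk => (((h.boundedMeasurable_erwMean k).mono (ℱ.mono (mem_range.1 hk).le)).const_mul
    _).mul ((h.boundedMeasurable_erwNoise k).mono (ℱ.mono (mem_range.1 hk)))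

lemma integral_erwSqMartingale_sq_le [IsFiniteMeasure μ] (h : IsERW μ ℱ X p) (n : ℕ) :
    ∫ ω, erwSqMartingale X (2 * p - 1) n ω ^ 2 ∂μ
      ≤ 16 * ∑ k ∈ range n, ∫ ω, erwMean X k ω ^ 2 ∂μ := by
  have hx (k : ℕ) := h.boundedMeasurable_erwMean k
  have hmds : IsBoundedMDS μ ℱ fun k ω =>
      2 * (k / (k + 1) : ℝ) * erwMean X k ω * erwNoise X (2 * p - 1) k ω :=
    h.isBoundedMDS_mul_erwNoise (fun k => (hx k).const_mul _) (by ext ω; simp [erwMean_zero])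
  simp_rw [erwSqMartingale]
  rw [hmds.integral_sum_sq, mul_sum]
  refine sum_le_sum fun k _ => ?_
  rw [← integral_const_mul]
  refine integral_mono ((hmds.boundedMeasurable k).pow 2).integrable
    ((((hx k).pow 2).const_mul 16).mono (ℱ.le k)).integrable fun ω => ?_
  have hweight : (k / (k + 1) : ℝ) ≤ 1 := div_le_one_of_le₀ (by linarith) (by positivity)
  calc (2 * (k / (k + 1) : ℝ) * erwMean X k ω * erwNoise X (2 * p - 1) k ω) ^ 2
      = 4 * (k / (k + 1) : ℝ) ^ 2 * erwMean X k ω ^ 2 * |erwNoise X (2 * p - 1) k ω| ^ 2 := by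
        rw [sq_abs]; ring
    _ ≤ 4 * 1 ^ 2 * erwMean X k ω ^ 2 * 2 ^ 2 := by
        gcongr
        exact h.abs_erwNoise_le_two k ω
    _ = 16 * erwMean X k ω ^ 2 := by ring

lemma exists_sum_integral_erwMean_sq_le [IsProbabilityMeasure μ] (h : IsERW μ ℱ X p)
    (hp : p < 3 / 4) :
    ∃ C, ∀ n : ℕ, 1 ≤ Real.log n →
      ∑ k ∈ range n, ∫ ω, erwMean X k ω ^ 2 ∂μ ≤ C * Real.log n := by
  obtain ⟨C, hC0, hC⟩ := h.exists_integral_erwMean_sq_le hp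
  refine ⟨C * 2, fun n hn => ?_⟩
  calc ∑ k ∈ range n, ∫ ω, erwMean X k ω ^ 2 ∂μ ≤ ∑ k ∈ range n, C * (1 / (k + 1)) :=
        sum_le_sum fun k _ => hC k
    _ = C * harmonic n := by rw [← mul_sum, sum_one_div_add_one_eq_harmonic]
    _ ≤ C * (2 * Real.log n) := by
        gcongr
        linarith [harmonic_le_one_add_log n]
    _ = C * 2 * Real.log n := by ring

lemma exists_sum_integral_abs_erwMean_cube_le [IsProbabilityMeasure μ] (h : IsERW μ ℱ X p)
    (hp : p < 3 / 4) :
    ∃ C, ∀ n : ℕ, 1 ≤ Real.log n →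
      ∑ k ∈ range n, ∫ ω, |erwMean X k ω| ^ 3 ∂μ ≤ C * √(Real.log n) := by
  obtain ⟨C₂, hC₂⟩ := h.exists_sum_integral_erwMean_sq_le hp
  obtain ⟨C₄, hC₄0, hC₄⟩ := h.exists_integral_erwMean_pow_four_le hp
  refine ⟨C₂ + C₄ * 2, fun n hn => ?_⟩
  have hlog : 0 < Real.log n := one_pos.trans_le hn
  have hr : 0 < √(Real.log n) := Real.sqrt_pos.2 hlog
  have hx (k : ℕ) := (h.boundedMeasurable_erwMean k).mono (ℱ.le k)
  have hcube (k : ℕ) : ∫ ω, |erwMean X k ω| ^ 3 ∂μ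
      ≤ (∫ ω, erwMean X k ω ^ 2 ∂μ) / √(Real.log n)
        + √(Real.log n) * ∫ ω, erwMean X k ω ^ 4 ∂μ := by
    have hsq := ((hx k).pow 2).integrable (μ := μ) |>.div_const √(Real.log n)
    have hfour := ((hx k).pow 4).integrable (μ := μ) |>.const_mul √(Real.log n)
    rw [← integral_div, ← integral_const_mul, ← integral_add hsq hfour]
    exact integral_mono ((hx k).comp_continuous (φ := fun x => |x| ^ 3) (by fun_prop)).integrable
      (hsq.add hfour)
      fun ω => abs_cube_le_sq_div_add_mul_pow_four _ hr
  have hfourth : ∑ k ∈ range n, ∫ ω, erwMean X k ω ^ 4 ∂μ ≤ C₄ * 2 :=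
    calc _ ≤ ∑ k ∈ range n, C₄ * (1 / ((k : ℝ) + 1) ^ 2) := sum_le_sum fun k _ => hC₄ k
      _ ≤ C₄ * 2 := by
        rw [← mul_sum]
        gcongr
        exact sum_one_div_add_one_sq_le_two n
  calc ∑ k ∈ range n, ∫ ω, |erwMean X k ω| ^ 3 ∂μ
      ≤ (∑ k ∈ range n, ∫ ω, erwMean X k ω ^ 2 ∂μ) / √(Real.log n)
        + √(Real.log n) * ∑ k ∈ range n, ∫ ω, erwMean X k ω ^ 4 ∂μ := by
        rw [sum_div, mul_sum, ← sum_add_distrib]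
        exact sum_le_sum fun k _ => hcube k
    _ ≤ C₂ * Real.log n / √(Real.log n) + √(Real.log n) * (C₄ * 2) := by
        gcongr
        exact hC₂ n hn
    _ = (C₂ + C₄ * 2) * √(Real.log n) := by
        rw [mul_div_assoc, Real.div_sqrt]
        ring

lemma exists_integral_abs_erwSqMartingale_le [IsProbabilityMeasure μ] (h : IsERW μ ℱ X p)
    (hp : p < 3 / 4) :
    ∃ C, ∀ n : ℕ, 1 ≤ Real.log n →
      ∫ ω, |erwSqMartingale X (2 * p - 1) n ω| ∂μ ≤ C * √(Real.log n) := by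
  obtain ⟨C, hC⟩ := h.exists_sum_integral_erwMean_sq_le hp
  refine ⟨1 + 16 * C, fun n hn => ?_⟩
  have hlog : 0 < Real.log n := one_pos.trans_le hn
  have hr : 0 < √(Real.log n) := Real.sqrt_pos.2 hlog
  have hM := (h.boundedMeasurable_erwSqMartingale n).mono (ℱ.le n)
  calc ∫ ω, |erwSqMartingale X (2 * p - 1) n ω| ∂μ
      ≤ ∫ ω, (√(Real.log n) + erwSqMartingale X (2 * p - 1) n ω ^ 2 / √(Real.log n)) ∂μ := by
        refine integral_mono hM.integrable.abs
          ((integrable_const _).add ((hM.pow 2).integrable.div_const _)) fun ω => ?_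
        exact abs_le_add_sq_div _ hr
    _ = √(Real.log n) + (∫ ω, erwSqMartingale X (2 * p - 1) n ω ^ 2 ∂μ) / √(Real.log n) := by
        rw [integral_add (integrable_const _) ((hM.pow 2).integrable.div_const _), integral_const,
          probReal_univ, one_smul, integral_div]
    _ ≤ √(Real.log n) + 16 * (C * Real.log n) / √(Real.log n) := by
        gcongr
        exact (h.integral_erwSqMartingale_sq_le n).trans (by gcongr; exact hC n hn)
    _ = (1 + 16 * C) * √(Real.log n) := by
        rw [← mul_assoc, mul_div_assoc, Real.div_sqrt]
        ring

lemma exists_integral_sum_erwMean_sq_mul_le [IsProbabilityMeasure μ] (h : IsERW μ ℱ X p)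
    (hp : p < 3 / 4) :
    ∃ C, ∀ n : ℕ, ∫ ω, ∑ k ∈ range n, erwMean X k ω ^ 2 * (1 / (k + 1)) ∂μ ≤ C := by
  obtain ⟨C, hC0, hC⟩ := h.exists_integral_erwMean_sq_le hp
  refine ⟨C * 2, fun n => ?_⟩
  rw [integral_finsetSum _ fun k _ =>
    (((h.boundedMeasurable_erwMean k).mono (ℱ.le k)).pow 2).integrable.mul_const _]
  calc ∑ k ∈ range n, ∫ ω, erwMean X k ω ^ 2 * (1 / (k + 1)) ∂μ
      ≤ ∑ k ∈ range n, C * (1 / ((k : ℝ) + 1) ^ 2) := by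
        refine sum_le_sum fun k _ => ?_
        rw [integral_mul_const, ← one_div_pow, sq, ← mul_assoc]
        gcongr
        exact hC k
    _ ≤ C * 2 := by
        rw [← mul_sum]
        gcongr
        exact sum_one_div_add_one_sq_le_two n

lemma integral_abs_sum_sq_sub_log_le [IsProbabilityMeasure μ] (h : IsERW μ ℱ X p)
    (ha : |2 * p - 1| < 1) (hp : p < 3 / 4) {n : ℕ} (hn : n ≠ 0) :
    ∫ ω, |∑ k ∈ range n, (erwScore X (2 * p - 1) k ω * erwNoise X (2 * p - 1) k ω) ^ 2
        - Real.log n / (3 - 4 * p)| ∂μ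
      ≤ 6 / (1 - (2 * p - 1) ^ 2) ^ 2 * ∑ k ∈ range n, ∫ ω, |erwMean X k ω| ^ 3 ∂μ
        + ∫ ω, ∑ k ∈ range n, erwMean X k ω ^ 2 * (1 / (k + 1)) ∂μ
        + (1 + (∫ ω, erwS X n ω ^ 2 ∂μ) / n + ∫ ω, |erwSqMartingale X (2 * p - 1) n ω| ∂μ)
          / (3 - 4 * p) := by
  have hx (k : ℕ) := (h.boundedMeasurable_erwMean k).mono (ℱ.le k)
  have hcube (k : ℕ) : Integrable (fun ω => |erwMean X k ω| ^ 3) μ :=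
    ((hx k).comp_continuous (φ := fun x => |x| ^ 3) (by fun_prop)).integrable
  have hcubes : Integrable (fun ω => 6 / (1 - (2 * p - 1) ^ 2) ^ 2
      * ∑ k ∈ range n, |erwMean X k ω| ^ 3) μ :=
    (integrable_finsetSum _ fun k _ => hcube k).const_mul _
  have hsquares : Integrable (fun ω => ∑ k ∈ range n, erwMean X k ω ^ 2 * (1 / (k + 1) : ℝ)) μ :=
    integrable_finsetSum _ fun k _ => ((hx k).pow 2).integrable.mul_const _
  have hU : Integrable (fun ω => erwS X n ω ^ 2 / n) μ :=
    (((h.boundedMeasurable_erwS n).mono (ℱ.le n)).pow 2).integrable.div_const _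
  have hM : Integrable (fun ω => |erwSqMartingale X (2 * p - 1) n ω|) μ :=
    ((h.boundedMeasurable_erwSqMartingale n).mono (ℱ.le n)).integrable.abs
  have hU1 : Integrable (fun ω => 1 + erwS X n ω ^ 2 / n) μ := (integrable_const 1).add hU
  have hdrift : Integrable (fun ω =>
      1 + erwS X n ω ^ 2 / n + |erwSqMartingale X (2 * p - 1) n ω|) μ :=
    hU1.add hM
  have hsum : Integrable (fun ω => ∑ k ∈ range n,
      (erwScore X (2 * p - 1) k ω * erwNoise X (2 * p - 1) k ω) ^ 2) μ :=
    integrable_finsetSum _ fun k _ =>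
      (((h.isBoundedMDS_erwScore_mul_erwNoise ha).boundedMeasurable k).pow 2).integrable
  refine (integral_mono (hsum.sub (integrable_const _)).abs
    ((hcubes.add hsquares).add (hdrift.div_const _))
    (h.abs_sum_sq_sub_log_le ha hp hn)).trans_eq ?_
  rw [integral_add' (hcubes.add hsquares) (hdrift.div_const _), integral_add' hcubes hsquares,
    integral_const_mul, integral_finsetSum _ fun k _ => hcube k, integral_div,
    integral_add hU1 hM, integral_add (integrable_const 1) hU,
    integral_div, integral_const, probReal_univ, one_smul]

lemma exists_integral_abs_sum_sq_sub_log_le [IsProbabilityMeasure μ] (h : IsERW μ ℱ X p)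
    (ha : |2 * p - 1| < 1) (hp : p < 3 / 4) :
    ∃ B, ∀ n : ℕ, 1 ≤ Real.log n →
      ∫ ω, |∑ k ∈ range n, (erwScore X (2 * p - 1) k ω * erwNoise X (2 * p - 1) k ω) ^ 2
        - Real.log n / (3 - 4 * p)| ∂μ ≤ B * √(Real.log n) := by
  obtain ⟨C₃, hC₃⟩ := h.exists_sum_integral_abs_erwMean_cube_le hp
  obtain ⟨C₁, hC₁⟩ := h.exists_integral_sum_erwMean_sq_mul_le hp
  obtain ⟨C₂, hC₂0, hC₂⟩ := h.exists_integral_erwS_sq_le hp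
  obtain ⟨C, hC⟩ := h.exists_integral_abs_erwSqMartingale_le hp
  have hC₁0 : 0 ≤ C₁ := by simpa only [range_zero, sum_empty, integral_zero] using hC₁ 0
  have hc : 0 < 3 - 4 * p := by linarith
  set K := 6 / (1 - (2 * p - 1) ^ 2) ^ 2
  refine ⟨K * C₃ + C₁ + (1 + C₂ + C) / (3 - 4 * p), fun n hn => ?_⟩
  have hn0 : n ≠ 0 := by
    rintro rfl
    norm_num at hn
  have hr : 1 ≤ √(Real.log n) := Real.one_le_sqrt.2 hn
  have hU : (∫ ω, erwS X n ω ^ 2 ∂μ) / n ≤ C₂ :=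
    div_le_of_le_mul₀ n.cast_nonneg hC₂0 (hC₂ n (Nat.one_le_iff_ne_zero.2 hn0))
  calc _ ≤ K * (C₃ * √(Real.log n)) + C₁ + (1 + C₂ + C * √(Real.log n)) / (3 - 4 * p) := by
        refine (h.integral_abs_sum_sq_sub_log_le ha hp hn0).trans ?_
        gcongr
        exacts [hC₃ n hn, hC₁ n, hC n hn]
    _ ≤ K * (C₃ * √(Real.log n)) + C₁ * √(Real.log n)
          + ((1 + C₂) * √(Real.log n) + C * √(Real.log n)) / (3 - 4 * p) := by
        gcongr
        exacts [le_mul_of_one_le_right hC₁0 hr, le_mul_of_one_le_right (by positivity) hr]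
    _ = _ := by ring

lemma tendstoInMeasure_sum_sq_div_log [IsProbabilityMeasure μ] (h : IsERW μ ℱ X p)
    (ha : |2 * p - 1| < 1) (hp : p < 3 / 4) :
    TendstoInMeasure μ (fun (n : ℕ) ω =>
      (∑ k ∈ range n, (erwScore X (2 * p - 1) k ω * erwNoise X (2 * p - 1) k ω) ^ 2)
        / √(Real.log n) ^ 2) atTop fun _ => 1 / (3 - 4 * p) := by
  have hmds := h.isBoundedMDS_erwScore_mul_erwNoise ha
  obtain ⟨B, hB⟩ := h.exists_integral_abs_sum_sq_sub_log_le ha hp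
  refine tendstoInMeasure_of_tendsto_integral_abs_sub
    (fun n => (integrable_finsetSum _ fun k _ =>
      ((hmds.boundedMeasurable k).pow 2).integrable).div_const _) (integrable_const _) ?_
  refine squeeze_zero' (.of_forall fun n => integral_nonneg fun ω => abs_nonneg _) ?_
    (tendsto_sqrt_log_atTop.const_div_atTop B)
  filter_upwards [tendsto_sqrt_log_atTop.eventually_ge_atTop 1] with n hn
  have hlog : 1 ≤ Real.log n := Real.one_le_sqrt.1 hn
  have hlog0 : 0 < Real.log n := one_pos.trans_le hlog
  have hscale (q : ℝ) : |q / √(Real.log n) ^ 2 - 1 / (3 - 4 * p)|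
      = |q - Real.log n / (3 - 4 * p)| / Real.log n :=
    calc _ = |(q - Real.log n / (3 - 4 * p)) / Real.log n| := by
          rw [Real.sq_sqrt hlog0.le, sub_div, div_right_comm, div_self hlog0.ne']
      _ = _ := by rw [abs_div, abs_of_pos hlog0]
  simp_rw [hscale]
  rw [integral_div, div_le_iff₀ hlog0]
  refine (hB n hlog).trans_eq ?_
  rw [div_mul_eq_mul_div, mul_div_assoc, Real.div_sqrt]

end IsERW

end ElephantRandomWalk

/-- In the diffusive regime `0 < p < 3/4`, `P_n / √(log n)` converges in distribution
to the centered Gaussian law of variance `1/(3 - 4p)`. -/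
theorem erw_score_clt_diffusive
    {m0 : MeasurableSpace Ω} (μ : Measure Ω) [IsProbabilityMeasure μ]
    (ℱ : Filtration ℕ m0) (X : ℕ → Ω → ℝ) (p : ℝ)
    (hERW : IsERW μ ℱ X p) (hp : 0 < p) (hp' : p < 3 / 4) :
    ∀ f : ℝ →ᵇ ℝ,
      Tendsto (fun n => ∫ ω, f (erwP X (2 * p - 1) n ω / Real.sqrt (Real.log n)) ∂μ)
        atTop (𝓝 (∫ x, f x ∂(gaussianReal 0 ((1 / (3 - 4 * p)).toNNReal)))) := by
  intro f
  have ha : |2 * p - 1| < 1 := abs_lt.2 ⟨by linarith, by linarith⟩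
  have hmds := hERW.isBoundedMDS_erwScore_mul_erwNoise ha
  have hbound (k : ℕ) (ω : Ω) :
      |erwScore X (2 * p - 1) k ω * erwNoise X (2 * p - 1) k ω| ≤ (1 - (2 * p - 1) ^ 2)⁻¹ * 2 := by
    rw [abs_mul]
    have hscore := hERW.abs_erwScore_le ha k ω
    exact mul_le_mul hscore (hERW.abs_erwNoise_le_two k ω) (abs_nonneg _)
      ((abs_nonneg _).trans hscore)
  have hvar : (((1 / (3 - 4 * p)).toNNReal : ℝ≥0) : ℝ) = 1 / (3 - 4 * p) :=
    Real.coe_toNNReal _ (one_div_nonneg.2 (by linarith))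
  have hQ := hERW.tendstoInMeasure_sum_sq_div_log ha hp'
  rw [← hvar] at hQ
  have hclt := hmds.tendstoInDistribution_gaussianReal hbound tendsto_sqrt_log_atTop hQ
  simpa only [erwP_eq_sum_range, id_eq] using tendsto_integral_of_tendstoInDistribution hclt f
end
end

section
/- For every integer n ≥ 1, the Gamma function satisfies the two-sided bound n + 1/4 < (Γ(n+1)/Γ(n+1/2))² < n + 1/2. -/
/-!
Write `q x = (Γ(x + 1) / Γ(x + 1/2))²`. Log-convexity of `Γ` gives `x ≤ q x ≤ x + 1/2`. The
functional equation gives `q (x + 1) = ((x + 1) / (x + 1/2))² * q x`, from which `q x / (x + 1/2)`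
increases and `q x / (x + 1/4)` decreases under `x ↦ x + 1`. One step of the former makes the upper
bound strict; iterating the latter, whose limit is `1` by the crude bounds, gives the lower bound.
-/

open Filter Topology

/-- **Wendel's inequality**. -/
theorem Gamma_add_le_rpow_mul_Gamma {x s : ℝ} (hx : 0 < x) (hs₀ : 0 < s) (hs₁ : s < 1) :
    Real.Gamma (x + s) ≤ x ^ s * Real.Gamma x := by
  have hΓ : 0 < Real.Gamma x := Real.Gamma_pos_of_pos hx
  calc Real.Gamma (x + s)
      = Real.Gamma ((1 - s) * x + s * (x + 1)) := by ring_nf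
    _ ≤ Real.Gamma x ^ (1 - s) * Real.Gamma (x + 1) ^ s :=
        Real.Gamma_mul_add_mul_le_rpow_Gamma_mul_rpow_Gamma hx (by linarith)
          (sub_pos.2 hs₁) hs₀ (sub_add_cancel 1 s)
    _ = x ^ s * (Real.Gamma x ^ (1 - s) * Real.Gamma x ^ s) := by
        rw [Real.Gamma_add_one hx.ne', Real.mul_rpow hx.le hΓ.le, mul_left_comm]
    _ = x ^ s * Real.Gamma x := by
        rw [← Real.rpow_add hΓ, sub_add_cancel, Real.rpow_one]

theorem Gamma_add_half_sq_le {x : ℝ} (hx : 0 < x) :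
    Real.Gamma (x + 1 / 2) ^ 2 ≤ x * Real.Gamma x ^ 2 := by
  have hΓ : 0 ≤ Real.Gamma (x + 1 / 2) := Real.Gamma_nonneg_of_nonneg (by positivity)
  have hWendel : Real.Gamma (x + 1 / 2) ≤ √x * Real.Gamma x := by
    rw [Real.sqrt_eq_rpow]
    exact Gamma_add_le_rpow_mul_Gamma hx one_half_pos one_half_lt_one
  calc Real.Gamma (x + 1 / 2) ^ 2
      ≤ (√x * Real.Gamma x) ^ 2 := pow_le_pow_left₀ hΓ hWendel 2
    _ = x * Real.Gamma x ^ 2 := by rw [mul_pow, Real.sq_sqrt hx.le]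

/-- The squared ratio `(Γ(x + 1) / Γ(x + 1/2))²`, as a function of a real variable so that it can be
compared with its translates along `x ↦ x + 1`. -/
noncomputable def gammaRatioSq (x : ℝ) : ℝ :=
  (Real.Gamma (x + 1) / Real.Gamma (x + 1 / 2)) ^ 2

theorem gammaRatioSq_pos {x : ℝ} (hx : -(1 / 2) < x) : 0 < gammaRatioSq x :=
  pow_pos (div_pos (Real.Gamma_pos_of_pos (by linarith)) (Real.Gamma_pos_of_pos (by linarith))) 2

theorem gammaRatioSq_add_one {x : ℝ} (hx : -(1 / 2) < x) :
    gammaRatioSq (x + 1) = ((x + 1) / (x + 1 / 2)) ^ 2 * gammaRatioSq x := by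
  have hnum : Real.Gamma (x + 1 + 1) = (x + 1) * Real.Gamma (x + 1) :=
    Real.Gamma_add_one (by linarith)
  have hden : Real.Gamma (x + 1 + 1 / 2) = (x + 1 / 2) * Real.Gamma (x + 1 / 2) := by
    rw [add_right_comm, Real.Gamma_add_one (by linarith)]
  rw [gammaRatioSq, gammaRatioSq, hnum, hden, mul_div_mul_comm, mul_pow]

theorem gammaRatioSq_le_add_half {x : ℝ} (hx : -(1 / 2) < x) : gammaRatioSq x ≤ x + 1 / 2 := by
  have hx' : 0 < x + 1 / 2 := by linarith
  rw [gammaRatioSq, div_pow, div_le_iff₀ (pow_pos (Real.Gamma_pos_of_pos hx') 2)]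
  simpa only [add_assoc, add_halves] using Gamma_add_half_sq_le hx'

theorem le_gammaRatioSq {x : ℝ} (hx : 0 < x) : x ≤ gammaRatioSq x := by
  have hΓ : 0 < Real.Gamma (x + 1 / 2) := Real.Gamma_pos_of_pos (by positivity)
  rw [gammaRatioSq, div_pow, le_div_iff₀ (pow_pos hΓ 2)]
  calc x * Real.Gamma (x + 1 / 2) ^ 2
      ≤ x * (x * Real.Gamma x ^ 2) := mul_le_mul_of_nonneg_left (Gamma_add_half_sq_le hx) hx.le
    _ = Real.Gamma (x + 1) ^ 2 := by rw [Real.Gamma_add_one hx.ne']; ring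

theorem gammaRatioSq_div_add_half_lt_add_one {x : ℝ} (hx : -(1 / 2) < x) :
    gammaRatioSq x / (x + 1 / 2) < gammaRatioSq (x + 1) / (x + 1 + 1 / 2) := by
  have hx₀ : 0 < x + 1 / 2 := by linarith
  have hx₁ : 0 < x + 1 + 1 / 2 := by linarith
  have hfactor : 1 / (x + 1 / 2) < ((x + 1) / (x + 1 / 2)) ^ 2 / (x + 1 + 1 / 2) := by
    rw [div_pow, div_div, div_lt_div_iff₀ hx₀ (by positivity)]
    nlinarith
  calc gammaRatioSq x / (x + 1 / 2)
      = 1 / (x + 1 / 2) * gammaRatioSq x := by ring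
    _ < ((x + 1) / (x + 1 / 2)) ^ 2 / (x + 1 + 1 / 2) * gammaRatioSq x :=
        mul_lt_mul_of_pos_right hfactor (gammaRatioSq_pos hx)
    _ = gammaRatioSq (x + 1) / (x + 1 + 1 / 2) := by rw [gammaRatioSq_add_one hx]; ring

theorem gammaRatioSq_add_one_div_add_quarter_lt {x : ℝ} (hx : -(1 / 4) < x) :
    gammaRatioSq (x + 1) / (x + 1 + 1 / 4) < gammaRatioSq x / (x + 1 / 4) := by
  have hx₀ : 0 < x + 1 / 4 := by linarith
  have hx₁ : 0 < x + 1 + 1 / 4 := by linarith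
  have hx₂ : 0 < x + 1 / 2 := by linarith
  have hfactor : ((x + 1) / (x + 1 / 2)) ^ 2 / (x + 1 + 1 / 4) < 1 / (x + 1 / 4) := by
    rw [div_pow, div_div, div_lt_div_iff₀ (by positivity) hx₀]
    linarith
  calc gammaRatioSq (x + 1) / (x + 1 + 1 / 4)
      = ((x + 1) / (x + 1 / 2)) ^ 2 / (x + 1 + 1 / 4) * gammaRatioSq x := by
        rw [gammaRatioSq_add_one (by linarith)]; ring
    _ < 1 / (x + 1 / 4) * gammaRatioSq x :=
        mul_lt_mul_of_pos_right hfactor (gammaRatioSq_pos (by linarith))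
    _ = gammaRatioSq x / (x + 1 / 4) := by ring

theorem tendsto_add_div_add_atTop_nhds_one (a b : ℝ) :
    Tendsto (fun x : ℝ ↦ (x + a) / (x + b)) atTop (𝓝 1) := by
  have hinv : Tendsto (fun x : ℝ ↦ 1 + (a - b) * (x + b)⁻¹) atTop (𝓝 1) := by
    simpa only [mul_zero, add_zero, id_eq, Pi.inv_apply] using
      ((tendsto_atTop_add_const_right _ b tendsto_id).inv_tendsto_atTop.const_mul
        (a - b)).const_add 1
  refine hinv.congr' ?_
  filter_upwards [eventually_gt_atTop (-b)] with x hx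
  have hxb : x + b ≠ 0 := by linarith
  field_simp
  ring

theorem tendsto_gammaRatioSq_div_add (c : ℝ) :
    Tendsto (fun x ↦ gammaRatioSq x / (x + c)) atTop (𝓝 1) := by
  refine tendsto_of_tendsto_of_tendsto_of_le_of_le'
    (tendsto_add_div_add_atTop_nhds_one 0 c) (tendsto_add_div_add_atTop_nhds_one (1 / 2) c) ?_ ?_
  all_goals
    filter_upwards [eventually_gt_atTop 0, eventually_gt_atTop (-c)] with x hx hxc
    refine div_le_div_of_nonneg_right ?_ (by linarith)
  · simpa only [add_zero] using le_gammaRatioSq hx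
  · exact gammaRatioSq_le_add_half (by linarith)

theorem gammaRatioSq_lt_add_half {x : ℝ} (hx : -(1 / 2) < x) : gammaRatioSq x < x + 1 / 2 := by
  have hx₀ : 0 < x + 1 / 2 := by linarith
  have hx₁ : 0 < x + 1 + 1 / 2 := by linarith
  rw [← div_lt_one hx₀]
  calc gammaRatioSq x / (x + 1 / 2)
      < gammaRatioSq (x + 1) / (x + 1 + 1 / 2) := gammaRatioSq_div_add_half_lt_add_one hx
    _ ≤ 1 := (div_le_one hx₁).2 (gammaRatioSq_le_add_half (by linarith))

theorem add_quarter_lt_gammaRatioSq {x : ℝ} (hx : -(1 / 2) < x) : x + 1 / 4 < gammaRatioSq x := by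
  rcases le_or_gt x (-(1 / 4)) with hx' | hx'
  · linarith [gammaRatioSq_pos hx]
  let u : ℕ → ℝ := fun n ↦ gammaRatioSq (x + n) / (x + n + 1 / 4)
  have hanti : StrictAnti u := strictAnti_nat_of_succ_lt fun n ↦ by
    simpa only [u, Nat.cast_succ, add_assoc] using
      gammaRatioSq_add_one_div_add_quarter_lt (lt_add_of_lt_of_nonneg hx' n.cast_nonneg)
  have hlim : Tendsto u atTop (𝓝 1) :=
    (tendsto_gammaRatioSq_div_add (1 / 4)).comp
      (tendsto_atTop_add_const_left _ x tendsto_natCast_atTop_atTop)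
  have hu : 1 < gammaRatioSq x / (x + 1 / 4) := by
    simpa only [u, Nat.cast_zero, add_zero] using
      (hanti.antitone.le_of_tendsto hlim 1).trans_lt (hanti zero_lt_one)
  exact (one_lt_div (by linarith)).1 hu

theorem gamma_ratio_sq_bounds_general {x : ℝ} (hx : -(1 / 2) < x) :
    x + 1 / 4 < (Real.Gamma (x + 1) / Real.Gamma (x + 1 / 2)) ^ 2 ∧
    (Real.Gamma (x + 1) / Real.Gamma (x + 1 / 2)) ^ 2 < x + 1 / 2 :=
  ⟨add_quarter_lt_gammaRatioSq hx, gammaRatioSq_lt_add_half hx⟩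

/-- For every integer `n ≥ 1`, `n + 1/4 < (Γ(n+1)/Γ(n+1/2))² < n + 1/2`. -/
theorem gamma_ratio_sq_bounds (n : ℕ) (hn : 1 ≤ n) :
    (n : ℝ) + 1 / 4 < (Real.Gamma ((n : ℝ) + 1) / Real.Gamma ((n : ℝ) + 1 / 2)) ^ 2 ∧
    (Real.Gamma ((n : ℝ) + 1) / Real.Gamma ((n : ℝ) + 1 / 2)) ^ 2 < (n : ℝ) + 1 / 2 :=
  gamma_ratio_sq_bounds_general ((neg_lt_zero.2 one_half_pos).trans_le n.cast_nonneg)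
end

section
/- In the superdiffusive regime 3/4 < p ≤ 1, assume that S_n/n^{2p−1} converges almost surely to a random variable L. Then (1/n^{4p−3})·Σ_{k=1}^{n} (S_k/k)² → L²/(4p−3) almost surely, and consequently V_n/n^{4p−3} → 4L²/(4p−3) almost surely as n → ∞. -/
/-!
The argument is pathwise. Squaring `S k / k ^ (2p - 1) → L` gives
`(S k / k) ^ 2 / k ^ (4p - 4) → L ^ 2`. Since `k ^ c - (k - 1) ^ c` is asymptotic to
`c * k ^ (c - 1)`, the Stolz–Cesàro theorem with denominators `n ^ c`, where `c = 4p - 3 > 0`,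
turns this into the limit of the normalized sums. The last summand is `O(n ^ (c - 1)) = o(n ^ c)`,
so the sum up to `n - 1` defining `V n` has the same limit.
-/

open MeasureTheory ProbabilityTheory Filter Finset
open scoped BoundedContinuousFunction ENNReal NNReal Topology

noncomputable section

variable {Ω : Type*}

section StolzCesaro

variable {E : Type*} [NormedAddCommGroup E]

theorem isLittleO_of_isLittleO_sub_succ {a : ℕ → E} {b : ℕ → ℝ} (hb : Monotone b)
    (hb_top : Tendsto b atTop atTop)
    (h : (fun n => a (n + 1) - a n) =o[atTop] fun n => b (n + 1) - b n) : a =o[atTop] b := by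
  have hb_sub_top : Tendsto (fun n => b n - b 0) atTop atTop :=
    tendsto_atTop_add_const_right atTop (-b 0) hb_top
  have h_sub : (fun n => a n - a 0) =o[atTop] fun n => b n - b 0 := by
    simpa only [sum_range_sub] using h.sum_range (fun n => sub_nonneg.2 (hb n.le_succ))
      (by simpa only [sum_range_sub] using hb_sub_top)
  have hb_norm : Tendsto (fun n => ‖b n‖) atTop atTop := tendsto_norm_atTop_atTop.comp hb_top
  have h_sub_isBigO : (fun n => b n - b 0) =O[atTop] b :=
    (Asymptotics.isBigO_refl b atTop).sub (Asymptotics.isLittleO_const_left.2 (.inr hb_norm)).isBigO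
  have h_initial : (fun _ => a 0) =o[atTop] b := Asymptotics.isLittleO_const_left.2 (.inr hb_norm)
  simpa only [sub_add_cancel] using (h_sub.trans_isBigO h_sub_isBigO).add h_initial

variable [NormedSpace ℝ E]

theorem stolz_cesaro_smul {a : ℕ → E} {b : ℕ → ℝ} {l : E} (hb : StrictMono b)
    (hb_top : Tendsto b atTop atTop)
    (h : Tendsto (fun n => (b (n + 1) - b n)⁻¹ • (a (n + 1) - a n)) atTop (𝓝 l)) :
    Tendsto (fun n => (b n)⁻¹ • a n) atTop (𝓝 l) := by
  have hb_sub_ne (n : ℕ) : b (n + 1) - b n ≠ 0 := (sub_pos.2 (hb n.lt_succ_self)).ne'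
  have h_error : (fun n => (b (n + 1) - b n)⁻¹ • (a (n + 1) - a n) - l) =o[atTop]
      fun _ => (1 : ℝ) :=
    (Asymptotics.isLittleO_one_iff ℝ).2 (tendsto_sub_nhds_zero_iff.2 h)
  have h_sub : (fun n => (a (n + 1) - b (n + 1) • l) - (a n - b n • l)) =o[atTop]
      fun n => b (n + 1) - b n := by
    refine ((Asymptotics.isBigO_refl (fun n => b (n + 1) - b n) atTop).smul_isLittleO
      h_error).congr (fun n => ?_) fun n => mul_one _
    rw [smul_sub, smul_inv_smul₀ (hb_sub_ne n), sub_smul]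
    abel
  have h_isLittleO : (fun n => a n - b n • l) =o[atTop] b :=
    isLittleO_of_isLittleO_sub_succ hb.monotone hb_top h_sub
  refine tendsto_sub_nhds_zero_iff.1 (h_isLittleO.tendsto_inv_smul_nhds_zero.congr' ?_)
  filter_upwards [hb_top.eventually_ne_atTop 0] with n hn
  rw [smul_sub, inv_smul_smul₀ hn]

end StolzCesaro

section PowerWeights

theorem tendsto_rpow_sub_sub_one_rpow_div (c : ℝ) :
    Tendsto (fun x : ℝ => (x ^ c - (x - 1) ^ c) / x ^ (c - 1)) atTop (𝓝 c) := by
  have h_deriv : HasDerivAt (fun x : ℝ => x ^ c) c 1 := by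
    simpa only [Real.one_rpow, mul_one] using
      Real.hasDerivAt_rpow_const (x := 1) (p := c) (.inl one_ne_zero)
  have h_neg_inv : Tendsto (fun x : ℝ => -x⁻¹) atTop (𝓝[<] 0) := by
    simpa only [neg_zero, Function.comp_def] using
      (tendsto_neg_nhdsGT (a := (0 : ℝ))).comp tendsto_inv_atTop_nhdsGT_zero
  refine (h_deriv.tendsto_slope_zero_left.comp h_neg_inv).congr' ?_
  filter_upwards [eventually_ge_atTop 1] with x hx
  have hx_pos : 0 < x := by positivity
  have h_base : 1 + -x⁻¹ = (x - 1) / x := by field_simp; ring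
  simp only [Function.comp_apply, smul_eq_mul, Real.one_rpow]
  rw [h_base, Real.div_rpow (sub_nonneg.2 hx) hx_pos.le, Real.rpow_sub_one hx_pos.ne']
  field_simp
  ring

theorem strictMono_natCast_rpow {c : ℝ} (hc : 0 < c) : StrictMono fun n : ℕ => (n : ℝ) ^ c :=
  fun m _ hmn => Real.rpow_lt_rpow m.cast_nonneg (Nat.cast_lt.2 hmn) hc

variable {E : Type*} [NormedAddCommGroup E] [NormedSpace ℝ E] {u : ℕ → E} {c : ℝ} {l : E}

theorem tendsto_rpow_inv_smul_sum_Icc (hc : 0 < c)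
    (hu : Tendsto (fun n : ℕ => ((n : ℝ) ^ (c - 1))⁻¹ • u n) atTop (𝓝 l)) :
    Tendsto (fun n : ℕ => ((n : ℝ) ^ c)⁻¹ • ∑ k ∈ Icc 1 n, u k) atTop (𝓝 (c⁻¹ • l)) := by
  refine stolz_cesaro_smul (strictMono_natCast_rpow hc)
    ((tendsto_rpow_atTop hc).comp tendsto_natCast_atTop_atTop) ?_
  have h_weights : Tendsto (fun n : ℕ => (((n + 1 : ℕ) : ℝ) ^ c - (n : ℝ) ^ c) /
      ((n + 1 : ℕ) : ℝ) ^ (c - 1)) atTop (𝓝 c) := by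
    refine ((tendsto_rpow_sub_sub_one_rpow_div c).comp
      (tendsto_natCast_atTop_atTop.comp (tendsto_add_atTop_nat 1))).congr fun n => ?_
    simp only [Function.comp_apply, Nat.cast_succ, add_sub_cancel_right]
  refine ((h_weights.inv₀ hc.ne').smul (hu.comp (tendsto_add_atTop_nat 1))).congr fun n => ?_
  have h_rpow_ne : ((n + 1 : ℕ) : ℝ) ^ (c - 1) ≠ 0 := by positivity
  rw [Function.comp_apply, smul_smul, inv_div, div_mul_eq_mul_div, mul_inv_cancel₀ h_rpow_ne,
    one_div, sum_Icc_succ_top n.succ_pos, add_sub_cancel_left]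

theorem tendsto_rpow_inv_smul_zero
    (hu : Tendsto (fun n : ℕ => ((n : ℝ) ^ (c - 1))⁻¹ • u n) atTop (𝓝 l)) :
    Tendsto (fun n : ℕ => ((n : ℝ) ^ c)⁻¹ • u n) atTop (𝓝 0) := by
  have h_lim := (tendsto_inv_atTop_nhds_zero_nat (𝕜 := ℝ)).smul hu
  rw [zero_smul] at h_lim
  refine h_lim.congr' ?_
  filter_upwards [eventually_ne_atTop 0] with n hn
  have hn_ne : (n : ℝ) ≠ 0 := Nat.cast_ne_zero.2 hn
  rw [smul_smul, ← mul_inv, Real.rpow_sub_one hn_ne, mul_div_cancel₀ _ hn_ne]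

theorem tendsto_rpow_inv_smul_sum_Icc_sub_one (hc : 0 < c)
    (hu : Tendsto (fun n : ℕ => ((n : ℝ) ^ (c - 1))⁻¹ • u n) atTop (𝓝 l)) :
    Tendsto (fun n : ℕ => ((n : ℝ) ^ c)⁻¹ • ∑ k ∈ Icc 1 (n - 1), u k) atTop
      (𝓝 (c⁻¹ • l)) := by
  have h_lim := (tendsto_rpow_inv_smul_sum_Icc hc hu).sub (tendsto_rpow_inv_smul_zero hu)
  rw [sub_zero] at h_lim
  refine h_lim.congr' ?_
  filter_upwards [eventually_ge_atTop 1] with n hn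
  obtain ⟨m, rfl⟩ := Nat.exists_eq_add_of_le' hn
  rw [← smul_sub, sum_Icc_succ_top hn, add_sub_cancel_right, Nat.add_sub_cancel]

end PowerWeights

theorem tendsto_div_natCast_sq_div_rpow {s : ℕ → ℝ} {a l : ℝ}
    (hs : Tendsto (fun n : ℕ => s n / (n : ℝ) ^ a) atTop (𝓝 l)) :
    Tendsto (fun n : ℕ => (s n / n) ^ 2 / (n : ℝ) ^ (2 * a - 2)) atTop (𝓝 (l ^ 2)) := by
  refine (hs.pow 2).congr' ?_
  filter_upwards [eventually_gt_atTop 0] with n hn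
  have hn_pos : (0 : ℝ) < n := Nat.cast_pos.2 hn
  have h_rpow : (n : ℝ) ^ (2 * a - 2) = ((n : ℝ) ^ a) ^ 2 / (n : ℝ) ^ 2 := by
    rw [Real.rpow_sub hn_pos, mul_comm, Real.rpow_mul hn_pos.le, Real.rpow_two, Real.rpow_two]
  rw [h_rpow, div_pow, div_pow, div_div_div_cancel_right₀ (by positivity)]

theorem erw_Vn_superdiffusive_general (X : ℕ → Ω → ℝ) {p : ℝ} (hp : 3 / 4 < p) {ω : Ω} {l : ℝ}
    (hl : Tendsto (fun n => erwS X n ω / (n : ℝ) ^ (2 * p - 1)) atTop (𝓝 l)) :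
    Tendsto (fun n : ℕ => (1 / (n : ℝ) ^ (4 * p - 3)) *
        ∑ k ∈ Finset.Icc 1 n, (erwS X k ω / k) ^ 2)
      atTop (𝓝 (l ^ 2 / (4 * p - 3))) ∧
    Tendsto (fun n : ℕ => erwV X n ω / (n : ℝ) ^ (4 * p - 3))
      atTop (𝓝 (4 * l ^ 2 / (4 * p - 3))) := by
  have hc : 0 < 4 * p - 3 := by linarith
  have h_exponent : 2 * (2 * p - 1) - 2 = 4 * p - 3 - 1 := by ring
  have h_summand : Tendsto (fun n : ℕ => ((n : ℝ) ^ (4 * p - 3 - 1))⁻¹ • (erwS X n ω / n) ^ 2)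
      atTop (𝓝 (l ^ 2)) := by
    simpa only [h_exponent, div_eq_inv_mul _ (_ ^ (_ : ℝ)), smul_eq_mul] using
      tendsto_div_natCast_sq_div_rpow hl
  constructor
  · simpa only [smul_eq_mul, one_div, inv_mul_eq_div (4 * p - 3)] using
      tendsto_rpow_inv_smul_sum_Icc hc h_summand
  · simpa only [erwV, smul_eq_mul, inv_mul_eq_div, mul_div_assoc] using
      (tendsto_rpow_inv_smul_sum_Icc_sub_one hc h_summand).const_mul 4

/-- In the superdiffusive regime `3/4 < p ≤ 1`, if `S_n / n^{2p-1} → L` almost surely,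
then `(1/n^{4p-3}) ∑_{k=1}^n (S_k/k)² → L²/(4p-3)` and `V_n / n^{4p-3} → 4L²/(4p-3)`
almost surely. -/
theorem erw_Vn_superdiffusive
    {m0 : MeasurableSpace Ω} (μ : Measure Ω) [IsProbabilityMeasure μ]
    (ℱ : Filtration ℕ m0) (X : ℕ → Ω → ℝ) (p : ℝ)
    (hERW : IsERW μ ℱ X p) (hp : 3 / 4 < p) (L : Ω → ℝ)
    (hL : ∀ᵐ ω ∂μ, Tendsto (fun n => erwS X n ω / (n : ℝ) ^ (2 * p - 1)) atTop (𝓝 (L ω))) :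
    ∀ᵐ ω ∂μ,
      Tendsto (fun n : ℕ => (1 / (n : ℝ) ^ (4 * p - 3)) *
          ∑ k ∈ Finset.Icc 1 n, (erwS X k ω / k) ^ 2)
        atTop (𝓝 (L ω ^ 2 / (4 * p - 3))) ∧
      Tendsto (fun n : ℕ => erwV X n ω / (n : ℝ) ^ (4 * p - 3))
        atTop (𝓝 (4 * L ω ^ 2 / (4 * p - 3))) := by
  filter_upwards [hL] with ω hω
  exact erw_Vn_superdiffusive_general X hp hω
end
end
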